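/- arXiv:2207.01235 — 2 statements merged into one kernel-verified Lean document; each statement's English description precedes it below -/
import Mathlib

section
/- Let d ≥ 1 and let μ, ν be Borel probability measures on ℝ^d with finite first moments (∫|x| dμ(x) < ∞ and ∫|y| dν(y) < ∞). Then the infimum over all convex 1-Lipschitz functions f : ℝ^d → ℝ of (∫ f dν − ∫ f dμ) is equal to the infimum over all Borel probability measures ρ on ℝ^d whose support is contained in the closed unit ball of (C(ν,ρ) − C(μ,ρ)). -/
open MeasureTheory Metric RealInnerProductSpace

noncomputable section

/-- The set of couplings of two measures on `ℝ^d`. -/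
def Couplings {d : ℕ} (α β : Measure (EuclideanSpace ℝ (Fin d))) :
    Set (Measure (EuclideanSpace ℝ (Fin d) × EuclideanSpace ℝ (Fin d))) :=
  {π | π.map Prod.fst = α ∧ π.map Prod.snd = β}

/-- `C(α,β) = sup_{π ∈ Π(α,β)} ∫ ⟨x,y⟩ dπ`. -/
def OTcost {d : ℕ} (α β : Measure (EuclideanSpace ℝ (Fin d))) : ℝ :=
  sSup {r : ℝ | ∃ π ∈ Couplings α β, r = ∫ p, ⟪p.1, p.2⟫ ∂π}


section Aux

variable {d : ℕ}

local notation "𝔼" => EuclideanSpace ℝ (Fin d)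

lemma couplings_prob {α ρ : Measure 𝔼} [IsProbabilityMeasure α] {π : Measure (𝔼 × 𝔼)}
    (hπ : π ∈ Couplings α ρ) : IsProbabilityMeasure π := by
  constructor
  have h : (π.map Prod.fst) Set.univ = 1 := by rw [hπ.1]; simp
  rwa [Measure.map_apply measurable_fst MeasurableSet.univ, Set.preimage_univ] at h

lemma couplings_fst {α ρ : Measure 𝔼} {π : Measure (𝔼 × 𝔼)}
    (hπ : π ∈ Couplings α ρ) {f : 𝔼 → ℝ} (hf : Integrable f α) :
    Integrable (fun p : 𝔼 × 𝔼 => f p.1) π ∧ ∫ p, f p.1 ∂π = ∫ x, f x ∂α := by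
  obtain ⟨h1, -⟩ := hπ
  subst h1
  exact ⟨hf.comp_measurable measurable_fst,
    (integral_map measurable_fst.aemeasurable hf.aestronglyMeasurable).symm⟩

lemma couplings_snd {α ρ : Measure 𝔼} {π : Measure (𝔼 × 𝔼)}
    (hπ : π ∈ Couplings α ρ) {f : 𝔼 → ℝ} (hf : Integrable f ρ) :
    Integrable (fun p : 𝔼 × 𝔼 => f p.2) π ∧ ∫ p, f p.2 ∂π = ∫ x, f x ∂ρ := by
  obtain ⟨-, h1⟩ := hπ
  subst h1
  exact ⟨hf.comp_measurable measurable_snd,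
    (integral_map measurable_snd.aemeasurable hf.aestronglyMeasurable).symm⟩

lemma couplings_ae {α ρ : Measure 𝔼} {π : Measure (𝔼 × 𝔼)}
    (hπ : π ∈ Couplings α ρ) {P : 𝔼 → Prop} (hP : ∀ᵐ y ∂ρ, P y) :
    ∀ᵐ p ∂π, P p.2 := by
  obtain ⟨-, h1⟩ := hπ
  subst h1
  exact ae_of_ae_map measurable_snd.aemeasurable hP

lemma ae_ball {ρ : Measure 𝔼} (hρ : ρ (closedBall (0 : 𝔼) 1)ᶜ = 0) :
    ∀ᵐ y ∂ρ, y ∈ closedBall (0 : 𝔼) 1 := hρ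

lemma couplings_bound {α ρ : Measure 𝔼} {π : Measure (𝔼 × 𝔼)}
    (hπ : π ∈ Couplings α ρ) {f g : 𝔼 → ℝ} (hf : Integrable f α) (hg : Integrable g ρ)
    {h : 𝔼 × 𝔼 → ℝ} (hh : Integrable h π) (hle : ∀ᵐ y ∂ρ, ∀ x, h (x, y) ≤ f x + g y) :
    ∫ p, h p ∂π ≤ ∫ x, f x ∂α + ∫ y, g y ∂ρ := by
  rw [← (couplings_fst hπ hf).2, ← (couplings_snd hπ hg).2,
    ← integral_add (couplings_fst hπ hf).1 (couplings_snd hπ hg).1]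
  refine integral_mono_ae hh ((couplings_fst hπ hf).1.add (couplings_snd hπ hg).1) ?_
  filter_upwards [couplings_ae hπ hle] with p hp
  exact hp p.1

lemma couplings_inner {α ρ : Measure 𝔼} {π : Measure (𝔼 × 𝔼)}
    (hπ : π ∈ Couplings α ρ) (hα : Integrable (fun x => ‖x‖) α)
    (hρ : ρ (closedBall (0 : 𝔼) 1)ᶜ = 0) :
    Integrable (fun p : 𝔼 × 𝔼 => (⟪p.1, p.2⟫ : ℝ)) π := by
  refine (couplings_fst hπ hα).1.mono' (by fun_prop) ?_
  filter_upwards [couplings_ae hπ (ae_ball hρ)] with p hp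
  refine (norm_inner_le_norm _ _).trans ?_
  have : ‖p.2‖ ≤ 1 := by simpa using hp
  nlinarith [norm_nonneg p.1]

lemma couplings_prod (α ρ : Measure 𝔼) [IsProbabilityMeasure α] [IsProbabilityMeasure ρ] :
    α.prod ρ ∈ Couplings α ρ := by
  constructor <;> simp

lemma le_OTcost {α ρ : Measure 𝔼} [IsProbabilityMeasure α] [IsProbabilityMeasure ρ]
    (hα : Integrable (fun x => ‖x‖) α)
    (hρ : ρ (closedBall (0 : 𝔼) 1)ᶜ = 0) {π : Measure (𝔼 × 𝔼)}
    (hπ : π ∈ Couplings α ρ) : ∫ p, (⟪p.1, p.2⟫ : ℝ) ∂π ≤ OTcost α ρ := by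
  refine le_csSup ⟨∫ x, ‖x‖ ∂α + ∫ y, (0:ℝ) ∂ρ, ?_⟩ ⟨π, hπ, rfl⟩
  rintro _ ⟨π', hπ', rfl⟩
  refine couplings_bound hπ' hα (integrable_const (0:ℝ)) (couplings_inner hπ' hα hρ) ?_
  filter_upwards [ae_ball hρ] with y hy x
  refine (real_inner_le_norm _ _).trans ?_
  have : ‖y‖ ≤ 1 := by simpa using hy
  nlinarith [norm_nonneg x]

lemma OTcost_le {α ρ : Measure 𝔼} [IsProbabilityMeasure α] [IsProbabilityMeasure ρ]
    (hα : Integrable (fun x => ‖x‖) α)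
    (hρ : ρ (closedBall (0 : 𝔼) 1)ᶜ = 0) {f g : 𝔼 → ℝ} (hf : Integrable f α) (hg : Integrable g ρ)
    (hle : ∀ᵐ y ∂ρ, ∀ x, (⟪x, y⟫ : ℝ) ≤ f x + g y) :
    OTcost α ρ ≤ ∫ x, f x ∂α + ∫ y, g y ∂ρ := by
  refine csSup_le ⟨_, _, couplings_prod α ρ, rfl⟩ ?_
  rintro _ ⟨π', hπ', rfl⟩
  exact couplings_bound hπ' hf hg (couplings_inner hπ' hα hρ) hle

lemma lip_integrable {α : Measure 𝔼} [IsProbabilityMeasure α]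
    (hα : Integrable (fun x => ‖x‖) α) {f : 𝔼 → ℝ} (hf : LipschitzWith 1 f) :
    Integrable f α := by
  refine ((integrable_const |f 0|).add hα).mono' hf.continuous.aestronglyMeasurable
    (Filter.Eventually.of_forall fun x => ?_)
  have := hf.dist_le_mul x 0
  simp only [Real.dist_eq, dist_zero_right, NNReal.coe_one, one_mul] at this
  simp only [Real.norm_eq_abs, Pi.add_apply]
  have h2 := abs_add_le (f x - f 0) (f 0)
  simp only [sub_add_cancel] at h2
  linarith

/-- Direction 1: from a convex Lipschitz function to a measure. -/
lemma dir1 (μ ν : Measure 𝔼)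
    [IsProbabilityMeasure μ] [IsProbabilityMeasure ν]
    (hμ : Integrable (fun x => ‖x‖) μ) (hν : Integrable (fun y => ‖y‖) ν)
    {f : 𝔼 → ℝ} (hc : ConvexOn ℝ Set.univ f) (hf : LipschitzWith 1 f) {ε : ℝ} (hε : 0 < ε) :
    ∃ ρ : Measure 𝔼, IsProbabilityMeasure ρ ∧ ρ (closedBall (0 : 𝔼) 1)ᶜ = 0 ∧
      OTcost ν ρ - OTcost μ ρ ≤ ∫ x, f x ∂ν - ∫ x, f x ∂μ + ε := by
  classical
  obtain ⟨l, c, hle, hsup⟩ := hc.univ_sSup_of_nat_affine_eq (𝕜 := ℝ)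
    hf.continuous.lowerSemicontinuous
  let q : ℕ → 𝔼 := fun i => (InnerProductSpace.toDual ℝ 𝔼).symm (l i)
  have hq : ∀ i x, (⟪x, q i⟫ : ℝ) = l i x := fun i x => by
    rw [real_inner_comm]; exact InnerProductSpace.toDual_symm_apply
  have hle' : ∀ i x, (⟪x, q i⟫ : ℝ) + c i ≤ f x := fun i x => by
    rw [hq]; exact hle i x
  have hex : ∀ x, ∃ i, f x - ε < (⟪x, q i⟫ : ℝ) + c i := fun x => by
    have h1 : f x = ⨆ i, ((l i x : ℝ) + c i) := by
      conv_lhs => rw [← hsup]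
      rw [iSup_apply]
      rfl
    have h2 : f x - ε < ⨆ i, ((l i x : ℝ) + c i) := by rw [← h1]; linarith
    obtain ⟨i, hi⟩ := exists_lt_of_lt_ciSup h2
    exact ⟨i, by rw [hq]; exact hi⟩
  have hfgrow : ∀ x, f x ≤ f 0 + ‖x‖ := fun x => by
    have := hf.dist_le_mul x 0
    simp only [Real.dist_eq, dist_zero_right, NNReal.coe_one, one_mul] at this
    linarith [le_abs_self (f x - f 0)]
  have hqn : ∀ i, ‖q i‖ ≤ 1 := fun i => by
    by_contra! hcon
    have h1 : ∀ t : ℝ, 0 ≤ t → t * (‖q i‖ * ‖q i‖ - ‖q i‖) ≤ f 0 - c i := fun t ht => by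
      have h2 := hle' i (t • q i)
      have h3 := hfgrow (t • q i)
      rw [real_inner_smul_left, real_inner_self_eq_norm_mul_norm] at h2
      rw [norm_smul, Real.norm_of_nonneg ht] at h3
      linarith
    have hpos : 0 < ‖q i‖ * ‖q i‖ - ‖q i‖ := by nlinarith
    have h4 := h1 ((|f 0 - c i| + 1) / (‖q i‖ * ‖q i‖ - ‖q i‖)) (by positivity)
    rw [div_mul_cancel₀ _ hpos.ne'] at h4
    linarith [le_abs_self (f 0 - c i)]
  let k : 𝔼 → ℕ := fun x => Nat.find (hex x)
  have hk : Measurable k := measurable_find hex fun i =>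
    measurableSet_lt (by have := hf.continuous; fun_prop) (by fun_prop)
  let T : 𝔼 → 𝔼 := fun x => q (k x)
  have hT : Measurable T := (measurable_from_nat (f := q)).comp hk
  let ρ := μ.map T
  have hρp : IsProbabilityMeasure ρ := Measure.isProbabilityMeasure_map hT.aemeasurable
  have hρ : ρ (closedBall (0 : 𝔼) 1)ᶜ = 0 := by
    rw [Measure.map_apply hT isClosed_closedBall.measurableSet.compl]
    convert measure_empty (μ := μ)
    ext x
    simpa [T] using hqn (k x)
  -- dual function
  let u := TopologicalSpace.denseSeq 𝔼
  let g : 𝔼 → ℝ := fun y => ⨆ j, ((⟪u j, y⟫ : ℝ) - f (u j))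
  have hg : Measurable g := Measurable.iSup fun j => by fun_prop
  have hbd : ∀ i, BddAbove (Set.range fun j => ((⟪u j, q i⟫ : ℝ) - f (u j))) := fun i =>
    ⟨- c i, by rintro _ ⟨j, rfl⟩; have := hle' i (u j); simp only; linarith⟩
  have hgle : ∀ i, g (q i) ≤ - c i := fun i => ciSup_le fun j => by
    have := hle' i (u j); linarith
  have hgge : ∀ i x, (⟪x, q i⟫ : ℝ) ≤ f x + g (q i) := fun i x => by
    have hcl : IsClosed {x | (⟪x, q i⟫ : ℝ) ≤ f x + g (q i)} :=
      isClosed_le (by fun_prop) (by have := hf.continuous; fun_prop)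
    have hsub : Set.range u ⊆ {x | (⟪x, q i⟫ : ℝ) ≤ f x + g (q i)} := by
      rintro _ ⟨j, rfl⟩
      have := le_ciSup (hbd i) j
      simp only [Set.mem_ofPred_eq]
      change _ ≤ g (q i) at this
      linarith
    have hd : closure (Set.range u) = Set.univ := (TopologicalSpace.denseRange_denseSeq 𝔼).closure_range
    have := closure_minimal hsub hcl
    rw [hd] at this
    exact this (Set.mem_univ x)
  have hfμ := lip_integrable hμ hf
  have hfν := lip_integrable hν hf
  have hTn : ∀ x, ‖T x‖ ≤ 1 := fun x => hqn _
  have hgT1 : ∀ x, (⟪x, T x⟫ : ℝ) ≤ f x + g (T x) := fun x => hgge _ x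
  have hgT2 : ∀ x, f x + g (T x) ≤ (⟪x, T x⟫ : ℝ) + ε := fun x => by
    have h1 : f x - ε < (⟪x, T x⟫ : ℝ) + c (k x) := Nat.find_spec (hex x)
    have h2 := hgle (k x)
    change g (T x) ≤ _ at h2
    linarith
  have hin : ∀ x, |(⟪x, T x⟫ : ℝ)| ≤ ‖x‖ := fun x => by
    refine (abs_real_inner_le_norm _ _).trans ?_
    nlinarith [norm_nonneg x, hTn x]
  have hgTi : Integrable (fun x => g (T x)) μ := by
    have hfn := hfμ.norm
    refine ((hμ.add hfn).add (integrable_const ε)).mono' (hg.comp hT).aestronglyMeasurable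
      (Filter.Eventually.of_forall fun x => ?_)
    simp only [Real.norm_eq_abs, Pi.add_apply]
    have h1 := hgT1 x
    have h2 := hgT2 x
    have h3 := abs_le.1 (hin x)
    rw [abs_le]
    constructor <;> linarith [le_abs_self (f x), neg_abs_le (f x)]
  have hgi : Integrable g ρ :=
    (integrable_map_measure hg.aestronglyMeasurable hT.aemeasurable).2 hgTi
  have hgint : ∫ y, g y ∂ρ = ∫ x, g (T x) ∂μ :=
    integral_map hT.aemeasurable hg.aestronglyMeasurable
  refine ⟨ρ, hρp, hρ, ?_⟩
  have hA : OTcost ν ρ ≤ ∫ x, f x ∂ν + ∫ y, g y ∂ρ := by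
    refine OTcost_le hν hρ hfν hgi ?_
    have : ∀ᵐ y ∂ρ, y ∈ Set.range q := by
      refine (ae_map_iff hT.aemeasurable (Set.countable_range q).measurableSet).2 ?_
      exact Filter.Eventually.of_forall fun x => ⟨k x, rfl⟩
    filter_upwards [this] with y hy x
    obtain ⟨i, rfl⟩ := hy
    exact hgge i x
  have hB : ∫ x, f x ∂μ + ∫ x, g (T x) ∂μ ≤ OTcost μ ρ + ε := by
    have hpair : Measurable fun x => (x, T x) := measurable_id.prodMk hT
    have hπ : μ.map (fun x => (x, T x)) ∈ Couplings μ ρ := by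
      constructor
      · rw [Measure.map_map measurable_fst hpair]
        exact Measure.map_id
      · rw [Measure.map_map measurable_snd hpair]
        rfl
    have h1 := le_OTcost hμ hρ hπ
    rw [integral_map hpair.aemeasurable (by fun_prop)] at h1
    have hii : Integrable (fun x => (⟪x, T x⟫ : ℝ)) μ :=
      hμ.mono' (measurable_id.inner hT).aestronglyMeasurable
        (Filter.Eventually.of_forall hin)
    rw [← integral_add hfμ hgTi]
    have h2 : ∫ x, (f x + g (T x)) ∂μ ≤ ∫ x, ((⟪x, T x⟫ : ℝ) + ε) ∂μ :=
      integral_mono (hfμ.add hgTi) (hii.add (integrable_const ε)) hgT2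
    rw [integral_add hii (integrable_const ε)] at h2
    simp at h2 h1
    linarith
  rw [hgint] at hA
  linarith

/-- Functions with growth bound on the strip. -/
def growthSpace (d : ℕ) : Submodule ℝ (EuclideanSpace ℝ (Fin d) × EuclideanSpace ℝ (Fin d) → ℝ) where
  carrier := {h | ∃ K : ℝ, 0 ≤ K ∧ ∀ x, ∀ y ∈ closedBall (0 : EuclideanSpace ℝ (Fin d)) 1,
    |h (x, y)| ≤ K * (1 + ‖x‖)}
  zero_mem' := ⟨0, le_rfl, by simp⟩
  add_mem' := by
    rintro a b ⟨K, hK, ha⟩ ⟨K', hK', hb⟩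
    refine ⟨K + K', by positivity, fun x y hy => ?_⟩
    have := ha x y hy
    have := hb x y hy
    have := abs_add_le (a (x, y)) (b (x, y))
    simp only [Pi.add_apply]
    linarith
  smul_mem' := by
    rintro c a ⟨K, hK, ha⟩
    refine ⟨|c| * K, by positivity, fun x y hy => ?_⟩
    have := ha x y hy
    simp only [Pi.smul_apply, smul_eq_mul, abs_mul, mul_assoc]
    gcongr

/-- Values of dual competitors. -/
def domSet (ν ρ : Measure 𝔼) (h : 𝔼 × 𝔼 → ℝ) : Set ℝ :=
  {r | ∃ f g : 𝔼 → ℝ, Integrable f ν ∧ Integrable g ρ ∧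
    (∀ x, ∀ y ∈ closedBall (0 : 𝔼) 1, h (x, y) ≤ f x + g y) ∧ r = ∫ x, f x ∂ν + ∫ y, g y ∂ρ}

lemma domSet_nonempty (ν ρ : Measure 𝔼)
    [IsProbabilityMeasure ν] [IsProbabilityMeasure ρ] (hν : Integrable (fun y => ‖y‖) ν)
    {h : 𝔼 × 𝔼 → ℝ} (hh : h ∈ growthSpace d) : (domSet ν ρ h).Nonempty := by
  obtain ⟨K, hK, hb⟩ := hh
  refine ⟨_, fun x => K * (1 + ‖x‖), fun _ => 0, ((integrable_const 1).add hν).const_mul K,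
    integrable_const 0, fun x y hy => ?_, rfl⟩
  have := hb x y hy
  linarith [le_abs_self (h (x, y))]

lemma domSet_lower (ν ρ : Measure 𝔼)
    [IsProbabilityMeasure ν] [IsProbabilityMeasure ρ]
    (hρ : ρ (closedBall (0 : 𝔼) 1)ᶜ = 0) {F : 𝔼 → ℝ} (hF : Integrable F ν)
    {h : 𝔼 × 𝔼 → ℝ} (hb : ∀ x, ∀ y ∈ closedBall (0 : 𝔼) 1, - F x ≤ h (x, y)) {r : ℝ}
    (hr : r ∈ domSet ν ρ h) : - ∫ x, F x ∂ν ≤ r := by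
  obtain ⟨f, g, hf, hg, hfg, rfl⟩ := hr
  have := couplings_bound (couplings_prod ν ρ) (hf.add hF) hg (h := fun _ => 0)
    (integrable_const 0) (by
      filter_upwards [ae_ball hρ] with y hy x
      have := hfg x y hy
      have := hb x y hy
      simp only [Pi.add_apply]
      linarith)
  simp only [Pi.add_apply, integral_zero] at this
  rw [integral_add hf hF] at this
  linarith

lemma domSet_bdd (ν ρ : Measure 𝔼)
    [IsProbabilityMeasure ν] [IsProbabilityMeasure ρ] (hν : Integrable (fun y => ‖y‖) ν)
    (hρ : ρ (closedBall (0 : 𝔼) 1)ᶜ = 0)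
    {h : 𝔼 × 𝔼 → ℝ} (hh : h ∈ growthSpace d) : BddBelow (domSet ν ρ h) := by
  obtain ⟨K, hK, hb⟩ := hh
  refine ⟨- ∫ x, K * (1 + ‖x‖) ∂ν, fun r hr => domSet_lower ν ρ hρ
    (((integrable_const 1).add hν).const_mul K) (fun x y hy => ?_) hr⟩
  have := hb x y hy
  simp only [Pi.add_apply]
  linarith [neg_abs_le (h (x, y))]

lemma domSet_smul_sub (ν ρ : Measure 𝔼) (h : 𝔼 × 𝔼 → ℝ) {c : ℝ} (hc : 0 < c) {r : ℝ}
    (hr : r ∈ domSet ν ρ h) : c * r ∈ domSet ν ρ (c • h) := by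
  obtain ⟨f, g, hf, hg, hfg, rfl⟩ := hr
  refine ⟨fun x => c * f x, fun x => c * g x, hf.const_mul c, hg.const_mul c, fun x y hy => ?_, ?_⟩
  · have := hfg x y hy
    simp only [Pi.smul_apply, smul_eq_mul, ← mul_add]
    gcongr
  · rw [integral_const_mul, integral_const_mul, mul_add]

lemma exists_functional (ν ρ : Measure 𝔼)
    [IsProbabilityMeasure ν] [IsProbabilityMeasure ρ] (hν : Integrable (fun y => ‖y‖) ν)
    (hρ : ρ (closedBall (0 : 𝔼) 1)ᶜ = 0) (e : growthSpace d) :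
    ∃ L : growthSpace d →ₗ[ℝ] ℝ,
      (∀ h : growthSpace d, ∀ r ∈ domSet ν ρ h.1, L h ≤ r) ∧ L e = sInf (domSet ν ρ e.1) := by
  let N : growthSpace d → ℝ := fun h => sInf (domSet ν ρ h.1)
  have Nle : ∀ h : growthSpace d, ∀ r ∈ domSet ν ρ h.1, N h ≤ r := fun h r hr =>
    csInf_le (domSet_bdd ν ρ hν hρ h.2) hr
  have N_hom1 : ∀ c : ℝ, 0 < c → ∀ h, N (c • h) ≤ c * N h := fun c hc h => by
    rw [← div_le_iff₀' hc]
    refine le_csInf (domSet_nonempty ν ρ hν h.2) fun r hr => ?_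
    rw [div_le_iff₀' hc]
    exact Nle _ _ (domSet_smul_sub ν ρ h.1 hc hr)
  have N_hom : ∀ c : ℝ, 0 < c → ∀ h, N (c • h) = c * N h := fun c hc h => by
    refine le_antisymm (N_hom1 c hc h) ?_
    have := N_hom1 c⁻¹ (inv_pos.2 hc) (c • h)
    rw [smul_smul, inv_mul_cancel₀ hc.ne', one_smul] at this
    rwa [← le_inv_mul_iff₀ hc]
  have N_add : ∀ a b, N (a + b) ≤ N a + N b := fun a b => by
    rw [← sub_le_iff_le_add]
    refine le_csInf (domSet_nonempty ν ρ hν a.2) fun r hr => ?_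
    rw [sub_le_comm]
    refine le_csInf (domSet_nonempty ν ρ hν b.2) fun s hs => ?_
    rw [sub_le_iff_le_add]
    refine Nle _ _ ?_
    obtain ⟨f, g, hf, hg, hfg, rfl⟩ := hr
    obtain ⟨f', g', hf', hg', hfg', rfl⟩ := hs
    refine ⟨fun x => f x + f' x, fun x => g x + g' x, hf.add hf', hg.add hg', fun x y hy => ?_, ?_⟩
    · have := hfg x y hy
      have := hfg' x y hy
      simp only [Submodule.coe_add, Pi.add_apply]
      linarith
    · rw [integral_add hf hf', integral_add hg hg']; ring
  have N_0 : N 0 = 0 := by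
    have := N_hom 2 (by norm_num) 0
    rw [smul_zero] at this; linarith
  by_cases he : e = 0
  · subst he
    obtain ⟨L, -, hL⟩ := exists_extension_of_le_sublinear (⊥ : growthSpace d →ₗ.[ℝ] ℝ) N N_hom N_add
      (by
        rintro ⟨x, hx⟩
        have : x = 0 := (Submodule.mem_bot ℝ).1 hx
        subst this
        rw [N_0]
        exact le_of_eq (LinearPMap.map_zero _))
    exact ⟨L, fun h r hr => (hL h).trans (Nle h r hr), by rw [map_zero]; exact N_0.symm⟩
  · obtain ⟨L, hL1, hL⟩ := exists_extension_of_le_sublinear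
      (LinearPMap.mkSpanSingleton (σ := RingHom.id ℝ) e (N e) he) N N_hom N_add (by
        rintro ⟨x, hx⟩
        obtain ⟨t, rfl⟩ := Submodule.mem_span_singleton.1 hx
        rw [LinearPMap.mkSpanSingleton'_apply]
        simp only [RingHom.id_apply, smul_eq_mul]
        rcases lt_trichotomy t 0 with ht | ht | ht
        · have h1 := N_add (t • e) ((-t) • e)
          rw [← add_smul, add_neg_cancel, zero_smul, N_0, N_hom (-t) (by linarith)] at h1
          linarith
        · subst ht; simp [N_0]
        · rw [N_hom t ht])
    refine ⟨L, fun h r hr => (hL h).trans (Nle h r hr), ?_⟩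
    have := hL1 ⟨e, Submodule.mem_span_singleton_self e⟩
    rw [this]
    exact LinearPMap.mkSpanSingleton'_apply_self _ _ _ _

/-- Cutoff function. -/
def cutoff (n : ℕ) (x : 𝔼) : ℝ := max 0 (min 1 ((n : ℝ) + 2 - ‖x‖))

lemma cutoff_cont (n : ℕ) : Continuous (cutoff (d := d) n) := by
  unfold cutoff; fun_prop

lemma cutoff_nonneg (n : ℕ) (x : 𝔼) : 0 ≤ cutoff n x := le_max_left _ _

lemma cutoff_le (n : ℕ) (x : 𝔼) : cutoff n x ≤ 1 := max_le zero_le_one (min_le_left _ _)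

lemma cutoff_one {n : ℕ} {x : 𝔼} (h : ‖x‖ ≤ n + 1) : cutoff n x = 1 := by
  unfold cutoff
  rw [min_eq_left (by linarith), max_eq_right zero_le_one]

lemma cutoff_zero {n : ℕ} {x : 𝔼} (h : (n : ℝ) + 2 < ‖x‖) : cutoff n x = 0 := by
  unfold cutoff
  rw [min_eq_right (by linarith), max_eq_left (by linarith)]

lemma cutoff_tendsto (x : 𝔼) : Filter.Tendsto (fun n => cutoff n x) Filter.atTop (nhds 1) := by
  refine tendsto_const_nhds.congr' ?_
  obtain ⟨N, hN⟩ := exists_nat_ge ‖x‖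
  filter_upwards [Filter.eventually_ge_atTop N] with n hn
  have : (N : ℝ) ≤ n := by exact_mod_cast hn
  exact (cutoff_one (by linarith)).symm

/-- Product cutoff. -/
def cutoff2 (n : ℕ) (p : 𝔼 × 𝔼) : ℝ := cutoff n p.1 * cutoff n p.2

lemma cutoff2_cont (n : ℕ) : Continuous (cutoff2 (d := d) n) :=
  ((cutoff_cont n).comp continuous_fst).mul ((cutoff_cont n).comp continuous_snd)

lemma cutoff2_nonneg (n : ℕ) (p : 𝔼 × 𝔼) : 0 ≤ cutoff2 n p :=
  mul_nonneg (cutoff_nonneg _ _) (cutoff_nonneg _ _)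

lemma cutoff2_le (n : ℕ) (p : 𝔼 × 𝔼) : cutoff2 n p ≤ 1 :=
  mul_le_one₀ (cutoff_le _ _) (cutoff_nonneg _ _) (cutoff_le _ _)

lemma cutoff2_tendsto (p : 𝔼 × 𝔼) :
    Filter.Tendsto (fun n => cutoff2 n p) Filter.atTop (nhds 1) := by
  simpa [cutoff2] using (cutoff_tendsto p.1).mul (cutoff_tendsto p.2)

lemma cutoff2_ball (n : ℕ) (x : 𝔼) {y : 𝔼} (hy : y ∈ closedBall (0 : 𝔼) 1) :
    cutoff2 n (x, y) = cutoff n x := by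
  have : ‖y‖ ≤ 1 := by simpa using hy
  have h : cutoff n y = 1 := cutoff_one (by have : (0:ℝ) ≤ n := n.cast_nonneg
                                            linarith)
  simp [cutoff2, h]

lemma cutoff2_compact (n : ℕ) : HasCompactSupport (cutoff2 (d := d) n) := by
  refine HasCompactSupport.intro
    ((isCompact_closedBall (0 : 𝔼) (n + 2)).prod (isCompact_closedBall (0 : 𝔼) (n + 2))) ?_
  intro p hp
  simp only [Set.mem_prod, mem_closedBall, dist_zero_right, not_and_or, not_le] at hp
  unfold cutoff2
  rcases hp with hp | hp
  · rw [cutoff_zero hp, zero_mul]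
  · rw [cutoff_zero hp, mul_zero]

lemma mem_growth_of_le {h : 𝔼 × 𝔼 → ℝ} {K : ℝ} (hK : 0 ≤ K)
    (hh : ∀ x, ∀ y ∈ closedBall (0 : 𝔼) 1, |h (x, y)| ≤ K * (1 + ‖x‖)) : h ∈ growthSpace d :=
  ⟨K, hK, hh⟩

lemma mem_growth_cc {h : 𝔼 × 𝔼 → ℝ} (hc : Continuous h) (hs : HasCompactSupport h) :
    h ∈ growthSpace d := by
  obtain ⟨C, hC⟩ := hs.exists_bound_of_continuous hc
  refine ⟨|C|, abs_nonneg _, fun x y _ => ?_⟩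
  have h1 := hC (x, y)
  rw [Real.norm_eq_abs] at h1
  nlinarith [norm_nonneg x, le_abs_self C, abs_nonneg C]

lemma duality (ν ρ : Measure 𝔼)
    [IsProbabilityMeasure ν] [IsProbabilityMeasure ρ] (hν : Integrable (fun y => ‖y‖) ν)
    (hρ : ρ (closedBall (0 : 𝔼) 1)ᶜ = 0) :
    ∃ π ∈ Couplings ν ρ, ∫ p, (⟪p.1, p.2⟫ : ℝ) ∂π
      = sInf (domSet ν ρ (fun p => (⟪p.1, p.2⟫ : ℝ))) := by
  have hcV : (fun p : 𝔼 × 𝔼 => (⟪p.1, p.2⟫ : ℝ)) ∈ growthSpace d := by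
    refine ⟨1, zero_le_one, fun x y hy => ?_⟩
    refine (abs_real_inner_le_norm _ _).trans ?_
    have : ‖y‖ ≤ 1 := by simpa using hy
    nlinarith [norm_nonneg x]
  obtain ⟨L, hL, hLc⟩ := exists_functional ν ρ hν hρ ⟨_, hcV⟩
  simp only at hLc
  have hLnonpos : ∀ h : growthSpace d, (∀ x, ∀ y ∈ closedBall (0 : 𝔼) 1, h.1 (x, y) ≤ 0) →
      L h ≤ 0 := fun h hh => by
    refine hL h 0 ⟨fun _ => 0, fun _ => 0, integrable_const 0, integrable_const 0, ?_, by simp⟩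
    simpa using hh
  have hLmono : ∀ h h' : growthSpace d,
      (∀ x, ∀ y ∈ closedBall (0 : 𝔼) 1, h.1 (x, y) ≤ h'.1 (x, y)) → L h ≤ L h' := fun h h' hh => by
    have := hLnonpos (h - h') (fun x y hy => by
      have := hh x y hy
      simp only [Submodule.coe_sub, Pi.sub_apply]
      linarith)
    rw [map_sub] at this
    linarith
  have hLf : ∀ (f : 𝔼 → ℝ) (_ : Integrable f ν) (hV : (fun p : 𝔼 × 𝔼 => f p.1) ∈ growthSpace d),
      L ⟨_, hV⟩ = ∫ x, f x ∂ν := fun f hf hV => by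
    apply le_antisymm
    · exact hL _ _ ⟨f, fun _ => 0, hf, integrable_const 0, by simp, by simp⟩
    · have := hL (-⟨_, hV⟩) (- ∫ x, f x ∂ν)
        ⟨fun x => - f x, fun _ => 0, hf.neg, integrable_const 0, by simp, by simp [integral_neg]⟩
      rw [map_neg] at this
      linarith
  have hLg : ∀ (f : 𝔼 → ℝ) (_ : Integrable f ρ) (hV : (fun p : 𝔼 × 𝔼 => f p.2) ∈ growthSpace d),
      L ⟨_, hV⟩ = ∫ x, f x ∂ρ := fun f hf hV => by
    apply le_antisymm
    · exact hL _ _ ⟨fun _ => 0, f, integrable_const 0, hf, by simp, by simp⟩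
    · have := hL (-⟨_, hV⟩) (- ∫ x, f x ∂ρ)
        ⟨fun _ => 0, fun x => - f x, integrable_const 0, hf.neg, by simp, by simp [integral_neg]⟩
      rw [map_neg] at this
      linarith
  let incl : CompactlySupportedContinuousMap (𝔼 × 𝔼) ℝ →ₗ[ℝ] growthSpace d :=
    { toFun := fun φ => ⟨φ, mem_growth_cc φ.continuous φ.hasCompactSupport⟩
      map_add' := fun _ _ => rfl
      map_smul' := fun _ _ => rfl }
  let Λ : CompactlySupportedContinuousMap (𝔼 × 𝔼) ℝ →ₚ[ℝ] ℝ :=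
    PositiveLinearMap.mk₀ (L ∘ₗ incl) (fun φ hφ => by
      have := hLmono 0 (incl φ) (fun x y _ => hφ (x, y))
      rw [map_zero] at this
      exact this)
  let π : Measure (𝔼 × 𝔼) := RealRMK.rieszMeasure Λ
  have hπL : ∀ (h : 𝔼 × 𝔼 → ℝ) (hc : Continuous h) (hs : HasCompactSupport h),
      ∫ p, h p ∂π = L ⟨h, mem_growth_cc hc hs⟩ := fun h hc hs =>
    RealRMK.integral_rieszMeasure Λ ⟨⟨h, hc⟩, hs⟩
  have hfmc : IsFiniteMeasureOnCompacts π := by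
    have : π.Regular := RealRMK.regular_rieszMeasure Λ
    infer_instance
  have hWν : Integrable (fun x : 𝔼 => 1 + ‖x‖) ν := (integrable_const 1).add hν
  -- integrability of the weight
  have hWV : (fun p : 𝔼 × 𝔼 => 1 + ‖p.1‖) ∈ growthSpace d := by
    refine ⟨1, zero_le_one, fun x y _ => ?_⟩
    rw [abs_of_nonneg (by positivity), one_mul]
  have hW : Integrable (fun p : 𝔼 × 𝔼 => 1 + ‖p.1‖) π := by
    refine ⟨by fun_prop, ?_⟩
    rw [hasFiniteIntegral_iff_ofReal (Filter.Eventually.of_forall fun p => by positivity)]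
    have hlim : ∀ p : 𝔼 × 𝔼, Filter.liminf
        (fun n => ENNReal.ofReal (cutoff2 n p * (1 + ‖p.1‖))) Filter.atTop
          = ENNReal.ofReal (1 + ‖p.1‖) := fun p => by
      refine Filter.Tendsto.liminf_eq (ENNReal.tendsto_ofReal ?_)
      simpa using (cutoff2_tendsto p).mul_const (1 + ‖p.1‖)
    have hbound : ∀ n, ∫⁻ p : 𝔼 × 𝔼, ENNReal.ofReal (cutoff2 n p * (1 + ‖p.1‖)) ∂π
        ≤ ENNReal.ofReal (L ⟨_, hWV⟩) := fun n => by
      have hc : Continuous fun p : 𝔼 × 𝔼 => cutoff2 n p * (1 + ‖p.1‖) := by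
        have := cutoff2_cont (d := d) n
        fun_prop
      have hs : HasCompactSupport fun p : 𝔼 × 𝔼 => cutoff2 n p * (1 + ‖p.1‖) :=
        (cutoff2_compact n).mul_right
      rw [← ofReal_integral_eq_lintegral_ofReal (hc.integrable_of_hasCompactSupport hs)
        (Filter.Eventually.of_forall fun p => mul_nonneg (cutoff2_nonneg n p) (by positivity)),
        hπL _ hc hs]
      refine ENNReal.ofReal_le_ofReal (hLmono _ _ fun x y _ => ?_)
      simp only
      have := cutoff2_le n (x, y)
      nlinarith [norm_nonneg x]
    calc ∫⁻ p : 𝔼 × 𝔼, ENNReal.ofReal (1 + ‖p.1‖) ∂π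
        = ∫⁻ p : 𝔼 × 𝔼, Filter.liminf
            (fun n => ENNReal.ofReal (cutoff2 n p * (1 + ‖p.1‖))) Filter.atTop ∂π := by
          simp_rw [hlim]
      _ ≤ Filter.liminf (fun n => ∫⁻ p : 𝔼 × 𝔼, ENNReal.ofReal (cutoff2 n p * (1 + ‖p.1‖)) ∂π)
            Filter.atTop := by
          refine lintegral_liminf_le fun n => ?_
          have := (cutoff2_cont (d := d) n).measurable
          fun_prop
      _ ≤ Filter.liminf (fun _ : ℕ => ENNReal.ofReal (L ⟨_, hWV⟩)) Filter.atTop :=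
          Filter.liminf_le_liminf (Filter.Eventually.of_forall hbound)
      _ = ENNReal.ofReal (L ⟨_, hWV⟩) := Filter.liminf_const _
      _ < ⊤ := ENNReal.ofReal_lt_top
  -- main representation
  have hrep : ∀ (h : 𝔼 × 𝔼 → ℝ) (_ : Continuous h) (K : ℝ) (_ : 0 ≤ K)
      (_ : ∀ p, |h p| ≤ K * (1 + ‖p.1‖)) (hV : h ∈ growthSpace d),
      ∫ p, h p ∂π = L ⟨h, hV⟩ := fun h hc K hK hb hV => by
    have hcn : ∀ n, Continuous fun p : 𝔼 × 𝔼 => cutoff2 n p * h p := fun n =>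
      (cutoff2_cont n).mul hc
    have hsn : ∀ n, HasCompactSupport fun p : 𝔼 × 𝔼 => cutoff2 n p * h p := fun n =>
      (cutoff2_compact n).mul_right
    have t1 : Filter.Tendsto (fun n => ∫ p, cutoff2 n p * h p ∂π) Filter.atTop
        (nhds (∫ p, h p ∂π)) := by
      refine tendsto_integral_of_dominated_convergence (fun p => K * (1 + ‖p.1‖))
        (fun n => (hcn n).aestronglyMeasurable) (hW.const_mul K)
        (fun n => Filter.Eventually.of_forall fun p => ?_)
        (Filter.Eventually.of_forall fun p => ?_)
      · rw [Real.norm_eq_abs, abs_mul, abs_of_nonneg (cutoff2_nonneg n p)]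
        have := cutoff2_le n p
        nlinarith [hb p, abs_nonneg (h p)]
      · simpa using (cutoff2_tendsto p).mul_const (h p)
    have hIn : ∀ n, Integrable (fun x : 𝔼 => (1 - cutoff n x) * (K * (1 + ‖x‖))) ν := fun n => by
      refine (hWν.const_mul K).mono' ?_ (Filter.Eventually.of_forall fun x => ?_)
      · have := cutoff_cont (d := d) n
        exact Continuous.aestronglyMeasurable (by fun_prop)
      · have h1 := cutoff_le n x
        have h2 := cutoff_nonneg n x
        have h3 : 0 ≤ K * (1 + ‖x‖) := by positivity
        rw [Real.norm_eq_abs, abs_of_nonneg (mul_nonneg (by linarith) h3)]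
        nlinarith
    have t2 : Filter.Tendsto (fun n => ∫ x : 𝔼, (1 - cutoff n x) * (K * (1 + ‖x‖)) ∂ν) Filter.atTop
        (nhds 0) := by
      have : (0 : ℝ) = ∫ x : 𝔼, (0 : ℝ) ∂ν := by simp
      rw [this]
      refine tendsto_integral_of_dominated_convergence (fun p => K * (1 + ‖p‖))
        (fun n => (hIn n).aestronglyMeasurable) (hWν.const_mul K)
        (fun n => Filter.Eventually.of_forall fun x => ?_)
        (Filter.Eventually.of_forall fun x => ?_)
      · have h1 := cutoff_le n x
        have h2 := cutoff_nonneg n x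
        have h3 : 0 ≤ K * (1 + ‖x‖) := by positivity
        rw [Real.norm_eq_abs, abs_of_nonneg (mul_nonneg (by linarith) h3)]
        nlinarith
      · simpa using ((cutoff_tendsto x).const_sub 1).mul_const (K * (1 + ‖x‖))
    have hIV : ∀ n, (fun p : 𝔼 × 𝔼 => (1 - cutoff n p.1) * (K * (1 + ‖p.1‖))) ∈ growthSpace d :=
      fun n => by
        refine ⟨K, hK, fun x y _ => ?_⟩
        have h1 := cutoff_le n x
        have h2 := cutoff_nonneg n x
        have h3 : 0 ≤ K * (1 + ‖x‖) := by positivity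
        simp only
        rw [abs_of_nonneg (mul_nonneg (by linarith) h3)]
        nlinarith
    have t3 : Filter.Tendsto (fun n => ∫ p, cutoff2 n p * h p ∂π) Filter.atTop
        (nhds (L ⟨h, hV⟩)) := by
      rw [tendsto_iff_norm_sub_tendsto_zero]
      refine squeeze_zero (fun _ => norm_nonneg _) (fun n => ?_) t2
      have hpt : ∀ x, ∀ y ∈ closedBall (0 : 𝔼) 1, |(1 - cutoff2 n (x, y)) * h (x, y)| ≤
          (1 - cutoff n x) * (K * (1 + ‖x‖)) := fun x y hy => by
        have h1 := cutoff_le n x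
        rw [cutoff2_ball n x hy, abs_mul, abs_of_nonneg (by linarith)]
        exact mul_le_mul_of_nonneg_left (hb (x, y)) (by linarith)
      rw [hπL _ (hcn n) (hsn n), ← hLf _ (hIn n) (hIV n), Real.norm_eq_abs, abs_le]
      constructor
      · rw [neg_le_sub_iff_le_add, ← map_add]
        refine hLmono _ _ fun x y hy => ?_
        have := (abs_le.1 (hpt x y hy)).2
        simp only [Submodule.coe_add, Pi.add_apply]
        linarith
      · rw [sub_le_iff_le_add, ← map_add]
        refine hLmono _ _ fun x y hy => ?_
        have := (abs_le.1 (hpt x y hy)).1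
        simp only [Submodule.coe_add, Pi.add_apply]
        linarith
    exact tendsto_nhds_unique t1 t3
  have hfin : IsFiniteMeasure π := by
    have h1 : Integrable (fun _ : 𝔼 × 𝔼 => (1 : ℝ)) π := by
      refine hW.mono' (by fun_prop) (Filter.Eventually.of_forall fun p => ?_)
      simp
    rcases integrable_const_iff.1 h1 with h | h
    · norm_num at h
    · exact h
  have hbdd : ∀ φ : BoundedContinuousFunction 𝔼 ℝ, ∀ x z : 𝔼, |φ x| ≤ ‖φ‖ * (1 + ‖z‖) :=
    fun φ x z => by
      have := φ.norm_coe_le_norm x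
      rw [Real.norm_eq_abs] at this
      nlinarith [norm_nonneg z, norm_nonneg φ]
  have hπc : π ∈ Couplings ν ρ := by
    constructor
    · have : IsFiniteMeasure (π.map Prod.fst) := Measure.isFiniteMeasure_map _ _
      refine ext_of_forall_integral_eq_of_IsFiniteMeasure fun φ => ?_
      have hV : (fun p : 𝔼 × 𝔼 => φ p.1) ∈ growthSpace d :=
        ⟨‖φ‖, norm_nonneg _, fun x y _ => hbdd φ _ _⟩
      rw [integral_map measurable_fst.aemeasurable φ.continuous.aestronglyMeasurable,
        hrep (fun p => φ p.1) (φ.continuous.comp continuous_fst) ‖φ‖ (norm_nonneg _)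
          (fun p => hbdd φ _ _) hV]
      exact hLf _ (φ.integrable ν) hV
    · have : IsFiniteMeasure (π.map Prod.snd) := Measure.isFiniteMeasure_map _ _
      refine ext_of_forall_integral_eq_of_IsFiniteMeasure fun φ => ?_
      have hV : (fun p : 𝔼 × 𝔼 => φ p.2) ∈ growthSpace d :=
        ⟨‖φ‖, norm_nonneg _, fun x y _ => hbdd φ _ _⟩
      rw [integral_map measurable_snd.aemeasurable φ.continuous.aestronglyMeasurable,
        hrep (fun p => φ p.2) (φ.continuous.comp continuous_snd) ‖φ‖ (norm_nonneg _)
          (fun p => hbdd φ _ _) hV]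
      exact hLg _ (φ.integrable ρ) hV
  refine ⟨π, hπc, ?_⟩
  rw [← hLc]
  -- truncated cost
  let P : 𝔼 → 𝔼 := fun y => (max 1 ‖y‖)⁻¹ • y
  have hPc : Continuous P := by
    have hm : Continuous fun y : 𝔼 => max 1 ‖y‖ := by fun_prop
    refine Continuous.smul (hm.inv₀ fun y => ?_) continuous_id
    have : (1:ℝ) ≤ max 1 ‖y‖ := le_max_left _ _
    positivity
  have hP1 : ∀ y, ‖P y‖ ≤ 1 := fun y => by
    have h1 : (1:ℝ) ≤ max 1 ‖y‖ := le_max_left _ _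
    rw [norm_smul, norm_inv, Real.norm_of_nonneg (by positivity), inv_mul_le_iff₀ (by positivity),
      mul_one]
    exact le_max_right _ _
  have hP2 : ∀ y ∈ closedBall (0 : 𝔼) 1, P y = y := fun y hy => by
    have : ‖y‖ ≤ 1 := by simpa using hy
    simp [P, max_eq_left this]
  have hb : ∀ p : 𝔼 × 𝔼, |(⟪p.1, P p.2⟫ : ℝ)| ≤ 1 * (1 + ‖p.1‖) := fun p => by
    refine (abs_real_inner_le_norm _ _).trans ?_
    nlinarith [norm_nonneg p.1, hP1 p.2]
  have hV : (fun p : 𝔼 × 𝔼 => (⟪p.1, P p.2⟫ : ℝ)) ∈ growthSpace d :=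
    ⟨1, zero_le_one, fun x y _ => hb (x, y)⟩
  have h1 := hrep (fun p : 𝔼 × 𝔼 => (⟪p.1, P p.2⟫ : ℝ)) (by fun_prop) 1 zero_le_one hb hV
  have h2 : L ⟨_, hV⟩ = L ⟨_, hcV⟩ := by
    apply le_antisymm
    · exact hLmono _ _ fun x y hy => by simp only [hP2 y hy]; exact le_rfl
    · exact hLmono _ _ fun x y hy => by simp only [hP2 y hy]; exact le_rfl
  rw [← h2, ← h1]
  refine integral_congr_ae ?_
  filter_upwards [couplings_ae hπc (ae_ball hρ)] with p hp
  rw [hP2 _ hp]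

/-- Direction 2: from a measure to a convex Lipschitz function. -/
lemma dir2 (μ ν : Measure 𝔼)
    [IsProbabilityMeasure μ] [IsProbabilityMeasure ν]
    (hμ : Integrable (fun x => ‖x‖) μ) (hν : Integrable (fun y => ‖y‖) ν)
    (ρ : Measure 𝔼) [IsProbabilityMeasure ρ] (hρ : ρ (closedBall (0 : 𝔼) 1)ᶜ = 0)
    {ε : ℝ} (hε : 0 < ε) :
    ∃ f : 𝔼 → ℝ, ConvexOn ℝ Set.univ f ∧ LipschitzWith 1 f ∧
      ∫ x, f x ∂ν - ∫ x, f x ∂μ ≤ OTcost ν ρ - OTcost μ ρ + ε := by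
  obtain ⟨π, hπ, hπe⟩ := duality ν ρ hν hρ
  have h1 := le_OTcost hν hρ hπ
  have hcV : (fun p : 𝔼 × 𝔼 => (⟪p.1, p.2⟫ : ℝ)) ∈ growthSpace d := by
    refine ⟨1, zero_le_one, fun x y hy => ?_⟩
    refine (abs_real_inner_le_norm _ _).trans ?_
    have : ‖y‖ ≤ 1 := by simpa using hy
    nlinarith [norm_nonneg x]
  obtain ⟨_, ⟨f, g, hf, hg, hfg, rfl⟩, hlt⟩ := exists_lt_of_csInf_lt (domSet_nonempty ν ρ hν hcV)
    (lt_add_of_pos_right _ hε)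
  simp only at hfg
  have hne : Nonempty (closedBall (0 : 𝔼) 1) := ⟨⟨0, by simp⟩⟩
  let F : 𝔼 → ℝ := fun x => ⨆ y : closedBall (0 : 𝔼) 1, ((⟪x, y.1⟫ : ℝ) - g y.1)
  have hbd : ∀ x, BddAbove (Set.range fun y : closedBall (0 : 𝔼) 1 => ((⟪x, y.1⟫ : ℝ) - g y.1)) :=
    fun x => ⟨f x, by
      rintro _ ⟨y, rfl⟩
      have := hfg x y.1 y.2
      simp only
      linarith⟩
  have hge : ∀ x, ∀ y ∈ closedBall (0 : 𝔼) 1, (⟪x, y⟫ : ℝ) - g y ≤ F x := fun x y hy =>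
    le_ciSup (hbd x) ⟨y, hy⟩
  have hFf : ∀ x, F x ≤ f x := fun x => ciSup_le fun y => by
    have := hfg x y.1 y.2
    linarith
  have hFc : ConvexOn ℝ Set.univ F := by
    refine ⟨convex_univ, fun x _ z _ a b ha hb hab => ciSup_le fun y => ?_⟩
    have h1 := mul_le_mul_of_nonneg_left (hge x y.1 y.2) ha
    have h2 := mul_le_mul_of_nonneg_left (hge z y.1 y.2) hb
    rw [inner_add_left, real_inner_smul_left, real_inner_smul_left]
    simp only [smul_eq_mul]
    have h3 : g y.1 = a * g y.1 + b * g y.1 := by rw [← add_mul, hab, one_mul]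
    linarith
  have hFl : LipschitzWith 1 F := by
    refine LipschitzWith.of_le_add fun x z => ciSup_le fun y => ?_
    have h1 := hge z y.1 y.2
    have h2 : (⟪x, y.1⟫ : ℝ) - ⟪z, y.1⟫ ≤ dist x z := by
      rw [← inner_sub_left, dist_eq_norm]
      refine (real_inner_le_norm _ _).trans ?_
      have : ‖y.1‖ ≤ 1 := mem_closedBall_zero_iff.1 y.2
      nlinarith [norm_nonneg (x - z)]
    linarith
  refine ⟨F, hFc, hFl, ?_⟩
  have h3 : ∫ x, F x ∂ν ≤ ∫ x, f x ∂ν := integral_mono (lip_integrable hν hFl) hf hFf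
  have h4 : OTcost μ ρ ≤ ∫ x, F x ∂μ + ∫ y, g y ∂ρ :=
    OTcost_le hμ hρ (lip_integrable hμ hFl) hg (by
      filter_upwards [ae_ball hρ] with y hy x
      have := hge x y hy
      linarith)
  linarith

end Aux

theorem stmt0 (d : ℕ) (hd : 1 ≤ d)
    (μ ν : Measure (EuclideanSpace ℝ (Fin d)))
    [IsProbabilityMeasure μ] [IsProbabilityMeasure ν]
    (hμ : Integrable (fun x => ‖x‖) μ) (hν : Integrable (fun y => ‖y‖) ν) :
    sInf {r : ℝ | ∃ f : EuclideanSpace ℝ (Fin d) → ℝ,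
        ConvexOn ℝ Set.univ f ∧ LipschitzWith 1 f ∧
        r = ∫ x, f x ∂ν - ∫ x, f x ∂μ}
      = sInf {r : ℝ | ∃ ρ : Measure (EuclideanSpace ℝ (Fin d)),
        IsProbabilityMeasure ρ ∧ ρ (closedBall (0 : EuclideanSpace ℝ (Fin d)) 1)ᶜ = 0 ∧
        r = OTcost ν ρ - OTcost μ ρ} := by
  have hb1 : ∀ f : EuclideanSpace ℝ (Fin d) → ℝ, LipschitzWith 1 f →
      - (∫ x, ‖x‖ ∂ν + ∫ x, ‖x‖ ∂μ) ≤ ∫ x, f x ∂ν - ∫ x, f x ∂μ := by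
    intro f hf
    have hfν := lip_integrable hν hf
    have hfμ := lip_integrable hμ hf
    have hx : ∀ x, |f x - f 0| ≤ ‖x‖ := fun x => by
      have := hf.dist_le_mul x 0
      simpa [Real.dist_eq] using this
    have h1 : ∫ x, (f 0 - ‖x‖) ∂ν ≤ ∫ x, f x ∂ν :=
      integral_mono ((integrable_const _).sub hν) hfν fun x => by
        have := (abs_le.1 (hx x)).1
        simp only
        linarith
    have h2 : ∫ x, f x ∂μ ≤ ∫ x, (f 0 + ‖x‖) ∂μ :=
      integral_mono hfμ ((integrable_const _).add hμ) fun x => by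
        have := (abs_le.1 (hx x)).2
        simp only
        linarith
    rw [integral_sub (integrable_const _) hν] at h1
    rw [integral_add (integrable_const _) hμ] at h2
    simp only [integral_const, probReal_univ, one_smul] at h1 h2
    linarith
  apply le_antisymm
  · refine le_csInf ⟨_, Measure.dirac 0, inferInstance, by simp, rfl⟩ ?_
    rintro _ ⟨ρ, hρp, hρ, rfl⟩
    refine le_of_forall_pos_le_add fun ε hε => ?_
    obtain ⟨f, hc, hf, hle⟩ := dir2 μ ν hμ hν ρ hρ hε
    refine le_trans (csInf_le ⟨- (∫ x, ‖x‖ ∂ν + ∫ x, ‖x‖ ∂μ), ?_⟩ ⟨f, hc, hf, rfl⟩) hle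
    rintro _ ⟨f, -, hf, rfl⟩
    exact hb1 f hf
  · refine le_csInf ⟨_, fun _ => 0, convexOn_const 0 convex_univ,
      (LipschitzWith.const 0).weaken zero_le_one, rfl⟩ ?_
    rintro _ ⟨f, hc, hf, rfl⟩
    refine le_of_forall_pos_le_add fun ε hε => ?_
    obtain ⟨ρ, hρp, hρ, hle⟩ := dir1 μ ν hμ hν hc hf hε
    refine le_trans (csInf_le ⟨- (∫ x, ‖x‖ ∂ν + ∫ x, ‖x‖ ∂μ), ?_⟩ ⟨ρ, hρp, hρ, rfl⟩) hle
    rintro _ ⟨ρ', hρp', hρ', rfl⟩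
    refine le_of_forall_pos_le_add fun ε' hε' => ?_
    obtain ⟨f', -, hf', hle'⟩ := dir2 μ ν hμ hν ρ' hρ' hε'
    exact (hb1 f' hf').trans hle'
end
end

section
/- Let d ≥ 1 and let μ, ν be Borel probability measures on ℝ^d with finite second moments. Then μ and ν are in convex order (μ ≼_c ν) if and only if for every Borel probability measure ρ on ℝ^d with bounded support one has W₂(ν,ρ)² − W₂(μ,ρ)² ≤ ∫|y|² dν(y) − ∫|x|² dμ(x). -/
open MeasureTheory Metric

noncomputable section

/-- The squared 2-Wasserstein distance `W₂(α,β)² = inf_{π ∈ Π(α,β)} ∫ |x-y|² dπ`. -/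
def W2sq {d : ℕ} (α β : Measure (EuclideanSpace ℝ (Fin d))) : ℝ :=
  sInf {r : ℝ | ∃ π ∈ Couplings α β, r = ∫ p, ‖p.1 - p.2‖ ^ 2 ∂π}

/-- Convex order: `∫ f dμ ≤ ∫ f dν` for all convex `f` integrable w.r.t. both. -/
def ConvexOrder {d : ℕ} (μ ν : Measure (EuclideanSpace ℝ (Fin d))) : Prop :=
  ∀ f : EuclideanSpace ℝ (Fin d) → ℝ, ConvexOn ℝ Set.univ f →
    Integrable f μ → Integrable f ν → ∫ x, f x ∂μ ≤ ∫ x, f x ∂ν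

/-- A measurable selection of a maximizer of finitely many measurable functions. -/
lemma exists_measurable_argmax {X ι : Type*} [MeasurableSpace X] [Countable ι]
    [MeasurableSpace ι] [MeasurableSingletonClass ι]
    (g : ι → X → ℝ) (hg : ∀ i, Measurable (g i)) (s : Finset ι) (hs : s.Nonempty) :
    ∃ I : X → ι, Measurable I ∧ (∀ x, I x ∈ s) ∧ ∀ x, ∀ i ∈ s, g i x ≤ g (I x) x := by
  classical
  induction hs using Finset.Nonempty.cons_induction with
  | singleton a => exact ⟨fun _ => a, measurable_const, by simp, by simp⟩
  | cons a s ha hs ih =>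
    obtain ⟨I, hI, hIs, hmax⟩ := ih
    have hm : Measurable (fun x => g (I x) x) := by
      have : Measurable (fun p : X × ι => g p.2 p.1) :=
        measurable_from_prod_countable_left fun i => hg i
      exact this.comp (measurable_id.prodMk hI)
    refine ⟨fun x => if g (I x) x ≤ g a x then a else I x,
      Measurable.ite (measurableSet_le hm (hg a)) measurable_const hI, ?_, ?_⟩
    · intro x
      dsimp only
      split_ifs <;> simp [hIs x]
    · intro x i hi
      rw [Finset.mem_cons] at hi
      dsimp only
      split_ifs with h
      · rcases hi with rfl | hi
        · exact le_rfl
        · exact (hmax x i hi).trans h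
      · rcases hi with rfl | hi
        · exact (not_le.1 h).le
        · exact hmax x i hi

lemma coupling_expand {d : ℕ} {α β : Measure (EuclideanSpace ℝ (Fin d))}
    {π : Measure (EuclideanSpace ℝ (Fin d) × EuclideanSpace ℝ (Fin d))}
    (hπ : π ∈ Couplings α β)
    (hα : Integrable (fun x => ‖x‖ ^ 2) α) (hβ : Integrable (fun x => ‖x‖ ^ 2) β) :
    Integrable (fun p => inner ℝ p.1 p.2) π ∧
    ∫ p, ‖p.1 - p.2‖ ^ 2 ∂π =
      ∫ x, ‖x‖ ^ 2 ∂α + ∫ x, ‖x‖ ^ 2 ∂β - 2 * ∫ p, inner ℝ p.1 p.2 ∂π := by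
  obtain ⟨h1, h2⟩ := hπ
  subst h1 h2
  have i1 : Integrable (fun p => ‖p.1‖ ^ 2) π := hα.comp_measurable measurable_fst
  have i2 : Integrable (fun p => ‖p.2‖ ^ 2) π := hβ.comp_measurable measurable_snd
  have i3 : Integrable (fun p => inner ℝ p.1 p.2) π := by
    refine (i1.add i2).mono' (by fun_prop) (Filter.Eventually.of_forall fun p => ?_)
    have := norm_inner_le_norm (𝕜 := ℝ) p.1 p.2
    simp only [Pi.add_apply]
    nlinarith [sq_nonneg (‖p.1‖ - ‖p.2‖), sq_nonneg (‖p.1‖), sq_nonneg ‖p.2‖]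
  refine ⟨i3, ?_⟩
  rw [integral_map (by fun_prop) (by fun_prop), integral_map (by fun_prop) (by fun_prop),
    ← integral_const_mul, ← integral_add i1 i2]
  refine Eq.trans ?_ (integral_sub (i1.add i2) (i3.const_mul 2))
  congr 1
  ext p
  rw [@norm_sub_sq_real]
  ring

lemma isProb_of_coupling {d : ℕ} {α β : Measure (EuclideanSpace ℝ (Fin d))}
    [IsProbabilityMeasure α]
    {π : Measure (EuclideanSpace ℝ (Fin d) × EuclideanSpace ℝ (Fin d))}
    (hπ : π ∈ Couplings α β) : IsProbabilityMeasure π := by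
  have : IsProbabilityMeasure (π.map Prod.fst) := by rw [hπ.1]; infer_instance
  exact Measure.isProbabilityMeasure_of_map Prod.fst

lemma prod_mem_couplings {d : ℕ} (α β : Measure (EuclideanSpace ℝ (Fin d)))
    [IsProbabilityMeasure α] [IsProbabilityMeasure β] : α.prod β ∈ Couplings α β := by
  constructor <;> simp

lemma W2sq_le {d : ℕ} {α β : Measure (EuclideanSpace ℝ (Fin d))}
    {π : Measure (EuclideanSpace ℝ (Fin d) × EuclideanSpace ℝ (Fin d))}
    (hπ : π ∈ Couplings α β) : W2sq α β ≤ ∫ p, ‖p.1 - p.2‖ ^ 2 ∂π := by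
  refine csInf_le ⟨0, ?_⟩ ⟨π, hπ, rfl⟩
  rintro r ⟨π, -, rfl⟩
  positivity

lemma le_W2sq {d : ℕ} {α β : Measure (EuclideanSpace ℝ (Fin d))}
    [IsProbabilityMeasure α] [IsProbabilityMeasure β] {c : ℝ}
    (h : ∀ π ∈ Couplings α β, c ≤ ∫ p, ‖p.1 - p.2‖ ^ 2 ∂π) : c ≤ W2sq α β := by
  refine le_csInf ⟨_, _, prod_mem_couplings α β, rfl⟩ ?_
  rintro r ⟨π, hπ, rfl⟩
  exact h π hπ

lemma integrable_norm_of_sq {d : ℕ} {α : Measure (EuclideanSpace ℝ (Fin d))}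
    [IsProbabilityMeasure α] (hα : Integrable (fun x => ‖x‖ ^ 2) α) :
    Integrable (fun x => x) α := by
  refine ((integrable_const (1 : ℝ)).add hα).mono' (by fun_prop)
    (Filter.Eventually.of_forall fun p => ?_)
  simp only [Pi.add_apply]
  nlinarith [sq_nonneg (‖p‖ - 1), sq_nonneg (‖p‖)]

lemma integrable_sup_affine {d : ℕ} {α : Measure (EuclideanSpace ℝ (Fin d))}
    [IsProbabilityMeasure α] (hα : Integrable (fun x => ‖x‖ ^ 2) α)
    {ι : Type*} (s : Finset ι) (hs : s.Nonempty) (a : ι → EuclideanSpace ℝ (Fin d)) (b : ι → ℝ) :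
    Integrable (fun x => s.sup' hs (fun i => inner ℝ (a i) x + b i)) α := by
  induction hs using Finset.Nonempty.cons_induction with
  | singleton i =>
    simpa using ((integrable_norm_of_sq hα).const_inner (a i)).add (integrable_const (b i))
  | cons i s hi hs ih =>
    have := (((integrable_norm_of_sq hα).const_inner (a i)).add (integrable_const (b i))).sup ih
    refine this.congr (Filter.Eventually.of_forall fun x => ?_)
    simp [Finset.sup'_cons hs]

lemma finite_max_le {d : ℕ} {μ ν : Measure (EuclideanSpace ℝ (Fin d))}
    [IsProbabilityMeasure μ] [IsProbabilityMeasure ν]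
    (hμ : Integrable (fun x => ‖x‖ ^ 2) μ) (hν : Integrable (fun y => ‖y‖ ^ 2) ν)
    (H : ∀ ρ : Measure (EuclideanSpace ℝ (Fin d)), IsProbabilityMeasure ρ →
        (∃ R : ℝ, ρ (closedBall (0 : EuclideanSpace ℝ (Fin d)) R)ᶜ = 0) →
        W2sq ν ρ - W2sq μ ρ ≤ ∫ y, ‖y‖ ^ 2 ∂ν - ∫ x, ‖x‖ ^ 2 ∂μ)
    (s : Finset ℕ) (hs : s.Nonempty) (a : ℕ → EuclideanSpace ℝ (Fin d))
    (B : EuclideanSpace ℝ (Fin d) → ℝ) :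
    ∫ x, s.sup' hs (fun i => inner ℝ (a i) x + B (a i)) ∂μ ≤
      ∫ x, s.sup' hs (fun i => inner ℝ (a i) x + B (a i)) ∂ν := by
  classical
  set F : EuclideanSpace ℝ (Fin d) → ℝ :=
    fun x => s.sup' hs (fun i => inner ℝ (a i) x + B (a i)) with hF
  obtain ⟨I, hI, hIs, hmax⟩ := exists_measurable_argmax
    (fun i (x : EuclideanSpace ℝ (Fin d)) => inner ℝ (a i) x + B (a i))
    (fun i => by fun_prop) s hs
  have hFI : ∀ x, F x = inner ℝ (a (I x)) x + B (a (I x)) := fun x =>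
    le_antisymm (Finset.sup'_le _ _ (hmax x))
      (Finset.le_sup' (fun i => inner ℝ (a i) x + B (a i)) (hIs x))
  set A : Finset (EuclideanSpace ℝ (Fin d)) := s.image a
  have hτ : Measurable (fun x => a (I x)) := (measurable_from_nat (f := a)).comp hI
  set B' : EuclideanSpace ℝ (Fin d) → ℝ := fun y => ∑ c ∈ A, ({c} : Set _).indicator (fun _ => B c) y
  have hB'A : ∀ y ∈ A, B' y = B y := by
    intro y hy
    simp only [B', Set.indicator_apply, Set.mem_singleton_iff]
    rw [Finset.sum_ite_eq A y]
    simp [hy]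
  have hB'm : Measurable B' :=
    Finset.measurable_fun_sum _ fun c _ => measurable_const.indicator (measurableSet_singleton c)
  set ρ : Measure (EuclideanSpace ℝ (Fin d)) := μ.map (fun x => a (I x)) with hρ
  have hρp : IsProbabilityMeasure ρ := Measure.isProbabilityMeasure_map hτ.aemeasurable
  have hρA : ∀ᵐ y ∂ρ, y ∈ A := by
    refine (ae_map_iff hτ.aemeasurable A.measurableSet).2 ?_
    exact Filter.Eventually.of_forall fun x => Finset.mem_image_of_mem a (hIs x)
  set R : ℝ := ∑ c ∈ A, ‖c‖
  have hAR : ∀ y ∈ A, ‖y‖ ≤ R := fun y hy =>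
    Finset.single_le_sum (f := fun c => ‖c‖) (fun c _ => norm_nonneg c) hy
  have hρ2 : Integrable (fun y => ‖y‖ ^ 2) ρ := by
    refine (integrable_const (R ^ 2)).mono' (by fun_prop) ?_
    filter_upwards [hρA] with y hy
    have := hAR y hy
    rw [Real.norm_of_nonneg (by positivity)]
    gcongr
  have hB'i : Integrable B' ρ := by
    refine integrable_finsetSum _ fun c _ => ?_
    exact (integrable_const _).indicator (measurableSet_singleton c)
  have h0 := H ρ hρp ⟨R, by
    rw [← mem_ae_iff]
    filter_upwards [hρA] with y hy
    simpa using hAR y hy⟩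
  -- coupling of `μ` and `ρ`
  have hc : μ.map (fun x => (x, a (I x))) ∈ Couplings μ ρ := by
    constructor
    · rw [Measure.map_map measurable_fst (by fun_prop)]
      exact Measure.map_id
    · rw [Measure.map_map measurable_snd (by fun_prop)]
      rfl
  have h1 := W2sq_le hc
  obtain ⟨hi1, he1⟩ := coupling_expand hc hμ hρ2
  have he2 : ∫ p, inner ℝ p.1 p.2 ∂(μ.map (fun x => (x, a (I x)))) =
      ∫ x, inner ℝ x (a (I x)) ∂μ := by
    rw [integral_map (by fun_prop) (by fun_prop)]
  rw [he1, he2] at h1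
  have hi1' : Integrable (fun x => inner ℝ x (a (I x))) μ := hi1.comp_measurable (by fun_prop)
  have hBi : Integrable (fun x => B' (a (I x))) μ := hB'i.comp_measurable hτ
  have h2 : ∫ x, F x ∂μ = ∫ x, inner ℝ x (a (I x)) ∂μ + ∫ y, B' y ∂ρ := by
    rw [hρ, integral_map (by fun_prop) (by fun_prop), ← integral_add hi1' hBi]
    congr 1
    ext x
    rw [hFI, hB'A _ (Finset.mem_image_of_mem a (hIs x)), real_inner_comm]
  have h3 : ∫ x, ‖x‖ ^ 2 ∂ν + ∫ x, ‖x‖ ^ 2 ∂ρ - 2 * (∫ x, F x ∂ν - ∫ y, B' y ∂ρ) ≤ W2sq ν ρ := by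
    refine le_W2sq fun π hπ => ?_
    obtain ⟨hi, he⟩ := coupling_expand hπ hν hρ2
    rw [he]
    have hFi : Integrable F ν := integrable_sup_affine hν s hs a _
    obtain ⟨p1, p2⟩ := hπ
    have j1 : Integrable (fun p => F p.1) π := by
      rw [← p1] at hFi
      exact hFi.comp_measurable measurable_fst
    have j2 : Integrable (fun p => B' p.2) π := by
      rw [← p2] at hB'i
      exact hB'i.comp_measurable measurable_snd
    have e1 : ∫ x, F x ∂ν = ∫ p, F p.1 ∂π := by
      rw [← p1] at hFi ⊢
      rw [integral_map (by fun_prop) hFi.aestronglyMeasurable]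
    have e2 : ∫ x, B' x ∂ρ = ∫ p, B' p.2 ∂π := by
      rw [← p2, integral_map (by fun_prop) (by fun_prop)]
    have hA' : ∀ᵐ p ∂π, p.2 ∈ A := by
      rw [← p2] at hρA
      exact ae_of_ae_map (by fun_prop) hρA
    have : ∫ p, inner ℝ p.1 p.2 ∂π ≤ ∫ x, F x ∂ν - ∫ y, B' y ∂ρ := by
      rw [e1, e2, ← integral_sub j1 j2]
      refine integral_mono_ae hi (j1.sub j2) ?_
      filter_upwards [hA'] with p hp
      rw [hB'A _ hp, le_sub_iff_add_le]
      obtain ⟨i, hi, hip⟩ := Finset.mem_image.1 hp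
      rw [← hip, real_inner_comm]
      exact Finset.le_sup' (fun i => inner ℝ (a i) p.1 + B (a i)) hi
    linarith
  linarith

lemma convexOrder_of_W2 {d : ℕ} {μ ν : Measure (EuclideanSpace ℝ (Fin d))}
    [IsProbabilityMeasure μ] [IsProbabilityMeasure ν]
    (hμ : Integrable (fun x => ‖x‖ ^ 2) μ) (hν : Integrable (fun y => ‖y‖ ^ 2) ν)
    (H : ∀ ρ : Measure (EuclideanSpace ℝ (Fin d)), IsProbabilityMeasure ρ →
        (∃ R : ℝ, ρ (closedBall (0 : EuclideanSpace ℝ (Fin d)) R)ᶜ = 0) →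
        W2sq ν ρ - W2sq μ ρ ≤ ∫ y, ‖y‖ ^ 2 ∂ν - ∫ x, ‖x‖ ^ 2 ∂μ) :
    ConvexOrder μ ν := by
  intro f hf hfμ hfν
  have hcont : Continuous f := hf.locallyLipschitz.continuous
  obtain ⟨l, c, hle, hsup⟩ := hf.real_univ_sSup_of_nat_affine_eq hcont.lowerSemicontinuous
  set a : ℕ → EuclideanSpace ℝ (Fin d) := fun n => (InnerProductSpace.toDual ℝ _).symm (l n)
  have hla : ∀ n x, l n x = inner ℝ (a n) x := fun n x => by simp [a]
  have hle' : ∀ n x, inner ℝ (a n) x + c n ≤ f x := fun n x => by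
    have := hle n x
    simpa [hla] using this
  have hsup' : ∀ x, ⨆ n, (inner ℝ (a n) x + c n) = f x := fun x => by
    rw [← hsup, iSup_apply]
    · simp [hla]
  set B : EuclideanSpace ℝ (Fin d) → ℝ := fun y => ⨅ x, (f x - inner ℝ y x)
  have hbdd : ∀ n, BddBelow (Set.range fun x => f x - inner ℝ (a n) x) := fun n =>
    ⟨c n, by rintro _ ⟨x, rfl⟩; have := hle' n x; dsimp only; linarith⟩
  have hB1 : ∀ n x, inner ℝ (a n) x + B (a n) ≤ f x := fun n x => by
    have := ciInf_le (hbdd n) x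
    simp only [B]
    linarith
  have hB2 : ∀ n, c n ≤ B (a n) := fun n => le_ciInf fun x => by
    have := hle' n x
    linarith
  have hs : ∀ n : ℕ, (Finset.range (n + 1)).Nonempty := fun n => ⟨0, by simp⟩
  set F : ℕ → EuclideanSpace ℝ (Fin d) → ℝ := fun n x =>
    (Finset.range (n + 1)).sup' (hs n) (fun i => inner ℝ (a i) x + B (a i))
  have hFf : ∀ n x, F n x ≤ f x := fun n x => Finset.sup'_le _ _ fun i _ => hB1 i x
  have hmono : ∀ x, Monotone (fun n => F n x) := fun x m n hmn =>
    Finset.sup'_mono _ (Finset.range_mono (by omega)) _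
  have hlim : ∀ x, Filter.Tendsto (fun n => F n x) Filter.atTop (nhds (f x)) := by
    intro x
    refine tendsto_atTop_isLUB (hmono x) ⟨?_, ?_⟩
    · rintro _ ⟨n, rfl⟩
      exact hFf n x
    · intro u hu
      rw [← hsup' x]
      refine ciSup_le fun n => ?_
      refine le_trans ?_ (hu ⟨n, rfl⟩)
      refine le_trans (add_le_add le_rfl (hB2 n)) ?_
      exact Finset.le_sup' (fun i => inner ℝ (a i) x + B (a i)) (by simp)
  have t1 := integral_tendsto_of_tendsto_of_monotone
    (fun n => integrable_sup_affine hμ _ (hs n) a (fun i => B (a i))) hfμ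
    (Filter.Eventually.of_forall hmono) (Filter.Eventually.of_forall hlim)
  have t2 := integral_tendsto_of_tendsto_of_monotone
    (fun n => integrable_sup_affine hν _ (hs n) a (fun i => B (a i))) hfν
    (Filter.Eventually.of_forall hmono) (Filter.Eventually.of_forall hlim)
  exact le_of_tendsto_of_tendsto' t1 t2 fun n => finite_max_le hμ hν H _ (hs n) a B

lemma exists_discretization {d : ℕ} (ρ : Measure (EuclideanSpace ℝ (Fin d)))
    [IsProbabilityMeasure ρ] (R : ℝ)
    (hR : ρ (closedBall (0 : EuclideanSpace ℝ (Fin d)) R)ᶜ = 0) (ε : ℝ) (hε : 0 < ε) :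
    ∃ (ι : Type) (_ : Fintype ι) (_ : Nonempty ι) (_ : MeasurableSpace ι)
      (_ : MeasurableSingletonClass ι) (T : EuclideanSpace ℝ (Fin d) → ι)
      (a : ι → EuclideanSpace ℝ (Fin d)), Measurable T ∧ (∀ᵐ z ∂ρ, ‖z - a (T z)‖ ≤ ε) ∧
      ∀ i, 0 < ρ.real (T ⁻¹' {i}) := by
  classical
  obtain ⟨t, -, htf, hcov⟩ :=
    (isCompact_closedBall (0 : EuclideanSpace ℝ (Fin d)) R).finite_cover_balls hε
  have hball : ∀ᵐ z ∂ρ, z ∈ closedBall (0 : EuclideanSpace ℝ (Fin d)) R := mem_ae_iff.2 hR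
  obtain ⟨z0, hz0⟩ := hball.exists
  have : Fintype t := htf.fintype
  have htn : Nonempty t := by
    obtain ⟨x, hx, -⟩ := Set.mem_iUnion₂.1 (hcov hz0)
    exact ⟨⟨x, hx⟩⟩
  obtain ⟨I, hI, -, hmax⟩ := exists_measurable_argmax
    (fun (c : t) (z : EuclideanSpace ℝ (Fin d)) => - dist z (c : EuclideanSpace ℝ (Fin d)))
    (fun c => by fun_prop) Finset.univ Finset.univ_nonempty
  have hpos : ∀ᵐ z ∂ρ, ρ (I ⁻¹' {I z}) ≠ 0 := by
    have : ∀ c : t, ∀ᵐ z ∂ρ, I z = c → ρ (I ⁻¹' {c}) ≠ 0 := by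
      intro c
      by_cases h : ρ (I ⁻¹' {c}) = 0
      · have h2 : ∀ᵐ z ∂ρ, z ∉ I ⁻¹' {c} := measure_eq_zero_iff_ae_notMem.1 h
        filter_upwards [h2] with z hz hzc
        exact absurd hzc hz
      · exact Filter.Eventually.of_forall fun _ _ => h
    filter_upwards [ae_all_iff.2 this] with z hz
    exact hz _ rfl
  obtain ⟨z1, hz1⟩ := hpos.exists
  set J := {c : t // ρ (I ⁻¹' {c}) ≠ 0}
  set g : t → J := fun c => if h : ρ (I ⁻¹' {c}) ≠ 0 then ⟨c, h⟩ else ⟨I z1, hz1⟩ with hg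
  -- transport to a small type
  refine ⟨Fin (Fintype.card J), inferInstance, ?_, inferInstance, inferInstance,
    fun z => Fintype.equivFin J (g (I z)), fun i => (((Fintype.equivFin J).symm i).1 : t),
    ?_, ?_, ?_⟩
  · exact ⟨Fintype.equivFin J ⟨I z1, hz1⟩⟩
  · exact (Measurable.of_discrete (f := fun c => Fintype.equivFin J (g c))).comp hI
  · filter_upwards [hpos, hball] with z hz hzb
    have : g (I z) = ⟨I z, hz⟩ := by simp [hg, hz]
    simp only [Equiv.symm_apply_apply, this]
    obtain ⟨x, hx, hxz⟩ := Set.mem_iUnion₂.1 (hcov hzb)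
    have h3 := hmax z ⟨x, hx⟩ (Finset.mem_univ _)
    rw [mem_ball] at hxz
    rw [← dist_eq_norm]
    linarith
  · intro i
    obtain ⟨⟨c, hc⟩, rfl⟩ := (Fintype.equivFin J).surjective i
    rw [measureReal_def, ENNReal.toReal_pos_iff]
    refine ⟨lt_of_lt_of_le (pos_iff_ne_zero.2 hc) (measure_mono ?_), measure_lt_top _ _⟩
    intro z hz
    have hz' : I z = c := hz
    simp [hg, hz', hc]

lemma integral_comp_finite {X ι : Type*} [MeasurableSpace X] [Fintype ι] [MeasurableSpace ι]
    [MeasurableSingletonClass ι] (ρ : Measure X) [IsProbabilityMeasure ρ] (T : X → ι)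
    (hT : Measurable T) (g : ι → ℝ) :
    ∫ z, g (T z) ∂ρ = ∑ i, ρ.real (T ⁻¹' {i}) * g i := by
  have hm : Measurable g := Measurable.of_discrete
  have := Measure.isProbabilityMeasure_map (μ := ρ) hT.aemeasurable
  rw [← integral_map (φ := T) (f := g) hT.aemeasurable hm.aestronglyMeasurable,
    integral_fintype .of_finite]
  simp [map_measureReal_apply hT]

lemma semidiscrete {d : ℕ} {ν : Measure (EuclideanSpace ℝ (Fin d))} [IsProbabilityMeasure ν]
    (hν : Integrable (fun y => ‖y‖ ^ 2) ν) {ι : Type} [Fintype ι] [Nonempty ι]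
    [MeasurableSpace ι] [MeasurableSingletonClass ι]
    (a : ι → EuclideanSpace ℝ (Fin d)) (p : ι → ℝ) (hp : ∀ i, 0 < p i) (hp1 : ∑ i, p i = 1)
    (m : ℝ)
    (hyp : ∀ (b : ι → ℝ) (c : ℝ), ∑ i, b i + c * m ≤
      ∫ y, Finset.univ.sup' Finset.univ_nonempty (fun i => inner ℝ (c • a i) y + b i / p i) ∂ν)
    (ε : ℝ) (hε : 0 < ε) :
    ∃ θ : ι → EuclideanSpace ℝ (Fin d) → ℝ, (∀ i, Measurable (θ i)) ∧ (∀ i y, 0 ≤ θ i y) ∧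
      (∀ y, ∑ i, p i * θ i y = 1) ∧ (∀ i, ∫ y, θ i y ∂ν = 1) ∧
      m - ε < ∑ i, p i * ∫ y, θ i y * inner ℝ (a i) y ∂ν := by
  classical
  set S : Set (ι → EuclideanSpace ℝ (Fin d) → ℝ) :=
    {θ | (∀ i, Measurable (θ i)) ∧ (∀ i y, 0 ≤ θ i y) ∧ (∀ y, ∑ i, p i * θ i y = 1)} with hS
  have hle : ∀ θ ∈ S, ∀ i y, θ i y ≤ (p i)⁻¹ := by
    rintro θ ⟨-, h0, h1⟩ i y
    have := Finset.single_le_sum (f := fun i => p i * θ i y)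
      (fun i _ => mul_nonneg (hp i).le (h0 i y)) (Finset.mem_univ i)
    rw [h1 y] at this
    rw [← one_div, le_div_iff₀ (hp i)]
    linarith
  have hInteg : ∀ θ ∈ S, ∀ i, Integrable (θ i) ν := by
    intro θ hθ i
    refine (integrable_const ((p i)⁻¹)).mono' (hθ.1 i).aestronglyMeasurable
      (Filter.Eventually.of_forall fun y => ?_)
    rw [Real.norm_of_nonneg (hθ.2.1 i y)]
    exact hle θ hθ i y
  have hinn : ∀ i, Integrable (fun y => inner ℝ (a i) y) ν := fun i =>
    (integrable_norm_of_sq hν).const_inner (a i)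
  have hInteg2 : ∀ θ ∈ S, ∀ i, Integrable (fun y => θ i y * inner ℝ (a i) y) ν := by
    intro θ hθ i
    refine (hinn i).bdd_mul (c := (p i)⁻¹) (hθ.1 i).aestronglyMeasurable
      (Filter.Eventually.of_forall fun y => ?_)
    rw [Real.norm_of_nonneg (hθ.2.1 i y)]
    exact hle θ hθ i y
  set Φ : (ι → EuclideanSpace ℝ (Fin d) → ℝ) → (ι → ℝ) × ℝ := fun θ =>
    (fun i => ∫ y, θ i y ∂ν, ∑ i, p i * ∫ y, θ i y * inner ℝ (a i) y ∂ν) with hΦ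
  have hSc : ∀ θ ∈ S, ∀ η ∈ S, ∀ s t : ℝ, 0 ≤ s → 0 ≤ t → s + t = 1 →
      (fun i y => s * θ i y + t * η i y) ∈ S ∧
      Φ (fun i y => s * θ i y + t * η i y) = s • Φ θ + t • Φ η := by
    intro θ hθ η hη s t hs ht hst
    refine ⟨⟨fun i => ?_, fun i y => ?_, fun y => ?_⟩, ?_⟩
    · exact ((hθ.1 i).const_mul s).add ((hη.1 i).const_mul t)
    · have := hθ.2.1 i y
      have := hη.2.1 i y
      positivity
    · have h1 := hθ.2.2 y
      have h2 := hη.2.2 y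
      calc ∑ i, p i * (s * θ i y + t * η i y)
          = s * ∑ i, p i * θ i y + t * ∑ i, p i * η i y := by
            rw [Finset.mul_sum, Finset.mul_sum, ← Finset.sum_add_distrib]
            exact Finset.sum_congr rfl fun i _ => by ring
        _ = 1 := by rw [h1, h2]; linarith
    · have e1 : ∀ i, ∫ y, (s * θ i y + t * η i y) ∂ν = s * ∫ y, θ i y ∂ν + t * ∫ y, η i y ∂ν := by
        intro i
        rw [integral_add ((hInteg θ hθ i).const_mul s) ((hInteg η hη i).const_mul t),
          integral_const_mul, integral_const_mul]
      have e2 : ∀ i, ∫ y, (s * θ i y + t * η i y) * inner ℝ (a i) y ∂ν =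
          s * ∫ y, θ i y * inner ℝ (a i) y ∂ν + t * ∫ y, η i y * inner ℝ (a i) y ∂ν := by
        intro i
        rw [← integral_const_mul, ← integral_const_mul,
          ← integral_add ((hInteg2 θ hθ i).const_mul s) ((hInteg2 η hη i).const_mul t)]
        congr 1
        ext y
        ring
      refine Prod.ext ?_ ?_
      · ext i
        simp [hΦ, e1]
      · simp only [hΦ, e2, Prod.snd_add, Prod.smul_snd, smul_eq_mul]
        rw [Finset.mul_sum, Finset.mul_sum, ← Finset.sum_add_distrib]
        exact Finset.sum_congr rfl fun i _ => by ring
  have hKc : Convex ℝ (Φ '' S) := by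
    rintro _ ⟨θ, hθ, rfl⟩ _ ⟨η, hη, rfl⟩ s t hs ht hst
    obtain ⟨h1, h2⟩ := hSc θ hθ η hη s t hs ht hst
    exact ⟨_, h1, h2⟩
  have hmem : ((fun _ => 1, m) : (ι → ℝ) × ℝ) ∈ closure (Φ '' S) := by
    by_contra hnot
    obtain ⟨f, u, hfu, huf⟩ := geometric_hahn_banach_closed_point hKc.closure isClosed_closure hnot
    set b : ι → ℝ := fun i => f (Pi.single i 1, 0)
    set c : ℝ := f (0, 1)
    have hf : ∀ q : (ι → ℝ) × ℝ, f q = ∑ i, q.1 i * b i + q.2 * c := by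
      intro q
      have h1 : q = ∑ i, q.1 i • ((Pi.single i 1, 0) : (ι → ℝ) × ℝ) + q.2 • ((0, 1) : (ι → ℝ) × ℝ) := by
        refine Prod.ext ?_ ?_
        · ext j
          simp [Prod.fst_sum, Finset.sum_apply, Pi.single_apply]
        · simp [Prod.snd_sum]
      conv_lhs => rw [h1]
      simp only [b, c, map_add, map_sum, map_smul, smul_eq_mul]
    obtain ⟨I, hI, -, hmax⟩ := exists_measurable_argmax
      (fun i (y : EuclideanSpace ℝ (Fin d)) => inner ℝ (c • a i) y + b i / p i)
      (fun i => by fun_prop) Finset.univ Finset.univ_nonempty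
    set θ : ι → EuclideanSpace ℝ (Fin d) → ℝ := fun i y => if I y = i then (p i)⁻¹ else 0 with hθdef
    have hθ : θ ∈ S := by
      refine ⟨fun i => ?_, fun i y => ?_, fun y => ?_⟩
      · exact Measurable.ite (hI (measurableSet_singleton i)) measurable_const measurable_const
      · simp only [hθdef]
        have := hp i
        split_ifs <;> positivity
      · simp [hθdef, (hp _).ne']
    have h1 := hfu _ (subset_closure ⟨θ, hθ, rfl⟩)
    have h2 := hyp b c
    have h3 : f (Φ θ) = ∫ y, Finset.univ.sup' Finset.univ_nonempty
        (fun i => inner ℝ (c • a i) y + b i / p i) ∂ν := by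
      rw [hf]
      simp only [hΦ]
      rw [Finset.sum_mul, ← Finset.sum_add_distrib]
      have e1 : ∀ i, (∫ y, θ i y ∂ν) * b i + p i * (∫ y, θ i y * inner ℝ (a i) y ∂ν) * c =
          ∫ y, (θ i y * b i + (p i * c) * (θ i y * inner ℝ (a i) y)) ∂ν := by
        intro i
        rw [integral_add ((hInteg θ hθ i).mul_const _) ((hInteg2 θ hθ i).const_mul _),
          integral_mul_const, integral_const_mul]
        ring
      rw [Finset.sum_congr rfl fun i _ => e1 i]
      refine (integral_finsetSum _ fun i _ =>
        ((hInteg θ hθ i).mul_const (b i)).add ((hInteg2 θ hθ i).const_mul (p i * c))).symm.trans ?_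
      congr 1
      ext y
      rw [Finset.sum_eq_single (I y) (fun i _ hi => by simp [hθdef, hi.symm]) (by simp)]
      have hpI := (hp (I y)).ne'
      trans inner ℝ (c • a (I y)) y + b (I y) / p (I y)
      · simp only [hθdef, if_true, real_inner_smul_left, Pi.add_apply]
        field_simp
        ring
      · exact le_antisymm (Finset.le_sup' (fun i => inner ℝ (c • a i) y + b i / p i)
          (Finset.mem_univ _)) (Finset.sup'_le _ _ (hmax y))
    rw [hf] at huf
    simp only [one_mul] at huf
    linarith
  -- perturb to get exact marginals
  set w : ι → ℝ := fun i => ∫ y, inner ℝ (a i) y ∂ν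
  have hlim : Filter.Tendsto (fun t : ℝ => (1 - t) * m + ∑ i, p i * ((1 - (1 - t) * 1) * w i))
      (nhdsWithin 0 (Set.Ioi 0)) (nhds m) := by
    have : Continuous (fun t : ℝ => (1 - t) * m + ∑ i, p i * ((1 - (1 - t) * 1) * w i)) := by
      fun_prop
    have h := (this.tendsto 0).mono_left (nhdsWithin_le_nhds (s := Set.Ioi 0))
    simpa using h
  obtain ⟨t, ht1, ht0, htlt⟩ : ∃ t : ℝ,
      m - ε < (1 - t) * m + ∑ i, p i * ((1 - (1 - t) * 1) * w i) ∧ 0 < t ∧ t < 1 := by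
    have e1 := hlim.eventually (lt_mem_nhds (show m - ε < m by linarith))
    have e2 : ∀ᶠ t : ℝ in nhdsWithin 0 (Set.Ioi 0), t ∈ Set.Ioo (0 : ℝ) 1 :=
      Ioo_mem_nhdsGT one_pos
    obtain ⟨t, h1, h2⟩ := (e1.and e2).exists
    exact ⟨t, h1, h2.1, h2.2⟩
  have hev1 : ∀ᶠ q : (ι → ℝ) × ℝ in nhds ((fun _ => 1, m) : (ι → ℝ) × ℝ),
      m - ε < (1 - t) * q.2 + ∑ i, p i * ((1 - (1 - t) * q.1 i) * w i) := by
    have : Continuous (fun q : (ι → ℝ) × ℝ =>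
        (1 - t) * q.2 + ∑ i, p i * ((1 - (1 - t) * q.1 i) * w i)) := by fun_prop
    exact (this.tendsto _).eventually (lt_mem_nhds ht1)
  have hev2 : ∀ᶠ q : (ι → ℝ) × ℝ in nhds ((fun _ => 1, m) : (ι → ℝ) × ℝ),
      ∀ i, (1 - t) * q.1 i < 1 := by
    refine Filter.eventually_all.2 fun i => ?_
    have : Continuous (fun q : (ι → ℝ) × ℝ => (1 - t) * q.1 i) := by fun_prop
    exact (this.tendsto _).eventually (gt_mem_nhds (by simpa using ht0))
  obtain ⟨_, ⟨θ, hθ, rfl⟩, hq1, hq2⟩ :=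
    ((mem_closure_iff_frequently.1 hmem).and_eventually (hev1.and hev2)).exists
  simp only [hΦ] at hq1 hq2
  set q : ι → ℝ := fun i => ∫ y, θ i y ∂ν with hq
  have hpq : ∑ i, p i * q i = 1 := by
    simp only [hq, ← integral_const_mul]
    rw [← integral_finsetSum _ fun i _ => (hInteg θ hθ i).const_mul _]
    simp [hθ.2.2]
  refine ⟨fun i y => (1 - t) * θ i y + (1 - (1 - t) * q i), fun i => ?_, fun i y => ?_,
    fun y => ?_, fun i => ?_, ?_⟩
  · exact ((hθ.1 i).const_mul _).add_const _
  · have h1 := hθ.2.1 i y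
    have h2 := hq2 i
    have h3 : 0 ≤ (1 - t) * θ i y := mul_nonneg (by linarith) h1
    linarith
  · have h1 := hθ.2.2 y
    calc ∑ i, p i * ((1 - t) * θ i y + (1 - (1 - t) * q i))
        = (1 - t) * ∑ i, p i * θ i y + (∑ i, p i - (1 - t) * ∑ i, p i * q i) := by
          rw [Finset.mul_sum, Finset.mul_sum, ← Finset.sum_sub_distrib, ← Finset.sum_add_distrib]
          exact Finset.sum_congr rfl fun i _ => by ring
      _ = 1 := by rw [h1, hp1, hpq]; ring
  · rw [integral_add ((hInteg θ hθ i).const_mul _) (integrable_const _), integral_const_mul]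
    simp [hq]
  · refine hq1.trans_eq ?_
    rw [Finset.mul_sum, ← Finset.sum_add_distrib]
    refine Finset.sum_congr rfl fun i _ => ?_
    have : ∫ y, ((1 - t) * θ i y + (1 - (1 - t) * q i)) * inner ℝ (a i) y ∂ν =
        (1 - t) * (∫ y, θ i y * inner ℝ (a i) y ∂ν) + (1 - (1 - t) * q i) * w i := by
      simp only [w]
      generalize 1 - (1 - t) * q i = r
      rw [← integral_const_mul, ← integral_const_mul,
        ← integral_add ((hInteg2 θ hθ i).const_mul _) ((hinn i).const_mul _)]
      congr 1
      ext y
      ring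
    rw [this]
    ring

lemma coupling_disc {d : ℕ} {α ρ : Measure (EuclideanSpace ℝ (Fin d))}
    [IsProbabilityMeasure α] [IsProbabilityMeasure ρ]
    {π : Measure (EuclideanSpace ℝ (Fin d) × EuclideanSpace ℝ (Fin d))}
    (hπ : π ∈ Couplings α ρ) (hα : Integrable (fun x => ‖x‖ ^ 2) α)
    (hρ : Integrable (fun x => ‖x‖ ^ 2) ρ)
    {ι : Type} [Fintype ι] [MeasurableSpace ι] [MeasurableSingletonClass ι]
    (T : EuclideanSpace ℝ (Fin d) → ι) (hT : Measurable T) (a : ι → EuclideanSpace ℝ (Fin d))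
    (ε : ℝ) (hTa : ∀ᵐ z ∂ρ, ‖z - a (T z)‖ ≤ ε) :
    Integrable (fun q => inner ℝ (a (T q.2)) q.1) π ∧
    |∫ q, inner ℝ q.1 q.2 ∂π - ∫ q, inner ℝ (a (T q.2)) q.1 ∂π| ≤ ε * ∫ x, ‖x‖ ∂α := by
  obtain ⟨hi, -⟩ := coupling_expand hπ hα hρ
  obtain ⟨p1, p2⟩ := hπ
  have hTa' : ∀ᵐ q ∂π, ‖q.2 - a (T q.2)‖ ≤ ε := by
    rw [← p2] at hTa
    exact ae_of_ae_map (by fun_prop) hTa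
  have hn : Integrable (fun x => ‖x‖) α := (integrable_norm_of_sq hα).norm
  have hn' : Integrable (fun q => ‖q.1‖) π := by
    rw [← p1] at hn
    exact hn.comp_measurable measurable_fst
  have hne : ∫ x, ‖x‖ ∂α = ∫ q, ‖q.1‖ ∂π := by
    rw [← p1, integral_map (by fun_prop) (by fun_prop)]
  have ham : Measurable (fun z => a (T z)) := (Measurable.of_discrete (f := a)).comp hT
  have hm : Measurable (fun q : EuclideanSpace ℝ (Fin d) × EuclideanSpace ℝ (Fin d) =>
      inner ℝ (a (T q.2)) q.1) := by
    have : Measurable (fun q : EuclideanSpace ℝ (Fin d) × EuclideanSpace ℝ (Fin d) =>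
      a (T q.2)) := ham.comp measurable_snd
    fun_prop
  have hInteg : Integrable (fun q => inner ℝ (a (T q.2)) q.1) π := by
    refine (hn'.const_mul (∑ i, ‖a i‖)).mono' hm.aestronglyMeasurable
      (Filter.Eventually.of_forall fun q => ?_)
    refine (norm_inner_le_norm _ _).trans ?_
    gcongr
    exact Finset.single_le_sum (f := fun i => ‖a i‖) (fun i _ => norm_nonneg _)
      (Finset.mem_univ (T q.2))
  refine ⟨hInteg, ?_⟩
  rw [← integral_sub hi hInteg, hne, ← integral_const_mul, ← Real.norm_eq_abs]
  refine norm_integral_le_of_norm_le (hn'.const_mul ε) ?_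
  filter_upwards [hTa'] with q hq
  rw [real_inner_comm q.1 (a (T q.2)), ← inner_sub_right]
  refine (norm_inner_le_norm _ _).trans ?_
  rw [mul_comm]
  gcongr

lemma glue {d : ℕ} {ν ρ : Measure (EuclideanSpace ℝ (Fin d))}
    [IsProbabilityMeasure ν] [IsProbabilityMeasure ρ]
    {ι : Type} [Fintype ι] [MeasurableSpace ι] [MeasurableSingletonClass ι]
    (T : EuclideanSpace ℝ (Fin d) → ι) (hT : Measurable T)
    (θ : ι → EuclideanSpace ℝ (Fin d) → ℝ) (hθm : ∀ i, Measurable (θ i))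
    (hθ0 : ∀ i y, 0 ≤ θ i y) (hθ1 : ∀ y, ∑ i, ρ.real (T ⁻¹' {i}) * θ i y = 1)
    (hθ2 : ∀ i, ∫ y, θ i y ∂ν = 1) :
    ∃ π ∈ Couplings ν ρ, ∀ g : ι → EuclideanSpace ℝ (Fin d) → ℝ,
      Integrable (fun q => g (T q.2) q.1) π →
      ∫ q, g (T q.2) q.1 ∂π = ∑ i, ρ.real (T ⁻¹' {i}) * ∫ y, θ i y * g i y ∂ν := by
  have hh : Measurable (fun q : EuclideanSpace ℝ (Fin d) × EuclideanSpace ℝ (Fin d) =>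
      ENNReal.ofReal (θ (T q.2) q.1)) := by
    have h1 : Measurable (fun q : EuclideanSpace ℝ (Fin d) × ι => θ q.2 q.1) :=
      measurable_from_prod_countable_left fun i => hθm i
    exact (h1.comp (measurable_fst.prodMk (hT.comp measurable_snd))).ennreal_ofReal
  have hz : ∀ y, ∫⁻ z, ENNReal.ofReal (θ (T z) y) ∂ρ = 1 := by
    intro y
    have hm : Measurable (fun z => θ (T z) y) :=
      (Measurable.of_discrete (f := fun i => θ i y)).comp hT
    have hi : Integrable (fun z => θ (T z) y) ρ := by
      refine (integrable_const (∑ i, θ i y)).mono' hm.aestronglyMeasurable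
        (Filter.Eventually.of_forall fun z => ?_)
      rw [Real.norm_of_nonneg (hθ0 _ _)]
      exact Finset.single_le_sum (f := fun i => θ i y) (fun i _ => hθ0 i y) (Finset.mem_univ _)
    rw [← ofReal_integral_eq_lintegral_ofReal hi (Filter.Eventually.of_forall fun z => hθ0 _ _),
      integral_comp_finite ρ T hT (fun i => θ i y), hθ1 y, ENNReal.ofReal_one]
  have hy : ∀ i, ∫⁻ y, ENNReal.ofReal (θ i y) ∂ν = 1 := by
    intro i
    have hi : Integrable (θ i) ν := by
      by_contra h
      have := hθ2 i
      rw [integral_undef h] at this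
      exact zero_ne_one this
    rw [← ofReal_integral_eq_lintegral_ofReal hi (Filter.Eventually.of_forall fun z => hθ0 _ _),
      hθ2 i, ENNReal.ofReal_one]
  refine ⟨(ν.prod ρ).withDensity (fun q => ENNReal.ofReal (θ (T q.2) q.1)), ⟨?_, ?_⟩, ?_⟩
  · refine Measure.ext_of_lintegral _ fun f hf => ?_
    rw [lintegral_map hf measurable_fst, lintegral_withDensity_eq_lintegral_mul _ hh (by fun_prop),
      lintegral_prod _ (by fun_prop)]
    refine lintegral_congr fun y => ?_
    simp only [Pi.mul_apply]
    have hm : Measurable (fun z => ENNReal.ofReal (θ (T z) y)) :=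
      (Measurable.of_discrete (f := fun i => ENNReal.ofReal (θ i y))).comp hT
    rw [lintegral_mul_const _ hm, hz, one_mul]
  · refine Measure.ext_of_lintegral _ fun f hf => ?_
    rw [lintegral_map hf measurable_snd, lintegral_withDensity_eq_lintegral_mul _ hh (by fun_prop),
      lintegral_prod_symm _ (by fun_prop)]
    refine lintegral_congr fun z => ?_
    simp only [Pi.mul_apply]
    rw [lintegral_mul_const _ (hθm _).ennreal_ofReal, hy, one_mul]
  · intro g hg
    have hlt : ∀ᵐ q ∂(ν.prod ρ), ENNReal.ofReal (θ (T q.2) q.1) < ⊤ :=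
      Filter.Eventually.of_forall fun q => ENNReal.ofReal_lt_top
    rw [integrable_withDensity_iff_integrable_smul' hh hlt] at hg
    rw [integral_withDensity_eq_integral_toReal_smul hh hlt, integral_prod_symm _ hg]
    simp only [ENNReal.toReal_ofReal (hθ0 _ _), smul_eq_mul]
    exact integral_comp_finite ρ T hT (fun i => ∫ y, θ i y * g i y ∂ν)

lemma convexOn_sup_affine {d : ℕ} {ι : Type*} (s : Finset ι) (hs : s.Nonempty)
    (a : ι → EuclideanSpace ℝ (Fin d)) (b : ι → ℝ) :
    ConvexOn ℝ Set.univ (fun x => s.sup' hs (fun i => inner ℝ (a i) x + b i)) := by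
  refine ⟨convex_univ, fun x _ y _ u v hu hv huv => Finset.sup'_le _ _ fun i hi => ?_⟩
  have h1 := Finset.le_sup' (fun i => inner ℝ (a i) x + b i) hi
  have h2 := Finset.le_sup' (fun i => inner ℝ (a i) y + b i) hi
  rw [inner_add_right, real_inner_smul_right, real_inner_smul_right]
  calc u * inner ℝ (a i) x + v * inner ℝ (a i) y + b i
      = u * (inner ℝ (a i) x + b i) + v * (inner ℝ (a i) y + b i) := by
        linear_combination (-b i) * huv
    _ ≤ _ := by
        simp only [smul_eq_mul]
        gcongr

lemma W2_of_convexOrder {d : ℕ} {μ ν : Measure (EuclideanSpace ℝ (Fin d))}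
    [IsProbabilityMeasure μ] [IsProbabilityMeasure ν]
    (hμ : Integrable (fun x => ‖x‖ ^ 2) μ) (hν : Integrable (fun y => ‖y‖ ^ 2) ν)
    (H : ConvexOrder μ ν) (ρ : Measure (EuclideanSpace ℝ (Fin d))) [IsProbabilityMeasure ρ]
    (R : ℝ) (hR : ρ (closedBall (0 : EuclideanSpace ℝ (Fin d)) R)ᶜ = 0) :
    W2sq ν ρ - W2sq μ ρ ≤ ∫ y, ‖y‖ ^ 2 ∂ν - ∫ x, ‖x‖ ^ 2 ∂μ := by
  have hρ2 : Integrable (fun y => ‖y‖ ^ 2) ρ := by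
    refine (integrable_const (R ^ 2)).mono' (by fun_prop) ?_
    have hball : ∀ᵐ z ∂ρ, z ∈ closedBall (0 : EuclideanSpace ℝ (Fin d)) R := mem_ae_iff.2 hR
    filter_upwards [hball] with y hy
    rw [mem_closedBall_zero_iff] at hy
    rw [Real.norm_of_nonneg (by positivity)]
    gcongr
  suffices W2sq ν ρ - (∫ y, ‖y‖ ^ 2 ∂ν - ∫ x, ‖x‖ ^ 2 ∂μ) ≤ W2sq μ ρ by linarith
  refine le_W2sq fun π₀ hπ₀ => ?_
  have : IsProbabilityMeasure π₀ := isProb_of_coupling hπ₀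
  refine le_of_forall_pos_le_add fun δ hδ => ?_
  set C : ℝ := ∫ x, ‖x‖ ∂μ + ∫ x, ‖x‖ ∂ν + 1 with hC
  have hCpos : 0 < C := by positivity
  set ε : ℝ := δ / (2 * C) with hε
  have hεpos : 0 < ε := by positivity
  have hεC : 2 * (ε * C) = δ := by rw [hε]; field_simp
  obtain ⟨ι, _, _, _, _, T, a, hT, hTa, hp⟩ := exists_discretization ρ R hR ε hεpos
  obtain ⟨i0, b0⟩ := coupling_disc hπ₀ hμ hρ2 T hT a ε hTa
  obtain ⟨-, he0⟩ := coupling_expand hπ₀ hμ hρ2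
  set p : ι → ℝ := fun i => ρ.real (T ⁻¹' {i}) with hpdef
  have hp1 : ∑ i, p i = 1 := by
    have := integral_comp_finite ρ T hT (fun _ => 1)
    simpa using this.symm
  set m : ℝ := ∫ q, inner ℝ (a (T q.2)) q.1 ∂π₀ with hm
  have hyp : ∀ (b : ι → ℝ) (c : ℝ), ∑ i, b i + c * m ≤
      ∫ y, Finset.univ.sup' Finset.univ_nonempty (fun i => inner ℝ (c • a i) y + b i / p i) ∂ν := by
    intro b c
    have iμ := integrable_sup_affine hμ Finset.univ Finset.univ_nonempty (fun i => c • a i)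
      (fun i => b i / p i)
    refine le_trans ?_ (H _ (convexOn_sup_affine Finset.univ Finset.univ_nonempty _ _) iμ
      (integrable_sup_affine hν Finset.univ Finset.univ_nonempty (fun i => c • a i)
      (fun i => b i / p i)))
    have hbm : Measurable (fun z => b (T z) / p (T z)) :=
      (Measurable.of_discrete (f := fun i => b i / p i)).comp hT
    have hbi : Integrable (fun z => b (T z) / p (T z)) ρ := by
      refine (integrable_const (∑ i, |b i / p i|)).mono' hbm.aestronglyMeasurable
        (Filter.Eventually.of_forall fun z => ?_)
      exact Finset.single_le_sum (f := fun i => |b i / p i|) (fun i _ => abs_nonneg _)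
        (Finset.mem_univ (T z))
    have e1 : ∑ i, b i = ∫ q, b (T q.2) / p (T q.2) ∂π₀ := by
      have h1 := integral_comp_finite ρ T hT (fun i => b i / p i)
      have h2 : ∫ z, b (T z) / p (T z) ∂ρ = ∫ q, b (T q.2) / p (T q.2) ∂π₀ := by
        rw [← hπ₀.2, integral_map (by fun_prop) hbm.aestronglyMeasurable]
      rw [← h2, h1]
      refine Finset.sum_congr rfl fun i _ => ?_
      have := (hp i).ne'
      simp only [hpdef]
      field_simp
    have hbi' : Integrable (fun q => b (T q.2) / p (T q.2)) π₀ := by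
      rw [← hπ₀.2] at hbi
      exact hbi.comp_measurable measurable_snd
    have iμ' := iμ
    rw [← hπ₀.1] at iμ'
    rw [← hπ₀.1, integral_map (by fun_prop) iμ'.aestronglyMeasurable, e1, hm,
      ← integral_const_mul, ← integral_add hbi' (i0.const_mul c)]
    refine integral_mono (hbi'.add (i0.const_mul c)) (iμ'.comp_measurable measurable_fst)
      fun q => ?_
    have := Finset.le_sup' (fun i => inner ℝ (c • a i) q.1 + b i / p i) (Finset.mem_univ (T q.2))
    refine le_trans (le_of_eq ?_) this
    simp only [real_inner_smul_left]
    ring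
  obtain ⟨θ, hθm, hθ0, hθ1, hθ2, hθ⟩ := semidiscrete hν a p hp hp1 m hyp ε hεpos
  obtain ⟨π, hπ, hπi⟩ := glue (ν := ν) (ρ := ρ) T hT θ hθm hθ0 hθ1 hθ2
  obtain ⟨i1, b1⟩ := coupling_disc hπ hν hρ2 T hT a ε hTa
  obtain ⟨-, he1⟩ := coupling_expand hπ hν hρ2
  have h1 := W2sq_le hπ
  have h2 := hπi (fun i y => inner ℝ (a i) y) i1
  rw [← h2] at hθ
  rw [he1] at h1
  rw [he0]
  have b0' := (abs_le.1 b0).2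
  have b1' := (abs_le.1 b1).1
  have hexp : ε * C = ε * ∫ x, ‖x‖ ∂μ + ε * ∫ x, ‖x‖ ∂ν + ε := by rw [hC]; ring
  linarith

theorem stmt1 (d : ℕ) (hd : 1 ≤ d)
    (μ ν : Measure (EuclideanSpace ℝ (Fin d)))
    [IsProbabilityMeasure μ] [IsProbabilityMeasure ν]
    (hμ : Integrable (fun x => ‖x‖ ^ 2) μ) (hν : Integrable (fun y => ‖y‖ ^ 2) ν) :
    ConvexOrder μ ν ↔
      ∀ ρ : Measure (EuclideanSpace ℝ (Fin d)), IsProbabilityMeasure ρ →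
        (∃ R : ℝ, ρ (closedBall (0 : EuclideanSpace ℝ (Fin d)) R)ᶜ = 0) →
        W2sq ν ρ - W2sq μ ρ ≤ ∫ y, ‖y‖ ^ 2 ∂ν - ∫ x, ‖x‖ ^ 2 ∂μ := by
  exact ⟨fun H ρ hρ ⟨R, hR⟩ => W2_of_convexOrder hμ hν H ρ R hR,
    fun H => convexOrder_of_W2 hμ hν H⟩
end
end
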